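/- arXiv:math/0611793 — 6 statements merged into one kernel-verified Lean document; each statement's English description precedes it below -/
import Mathlib

section
/- Let μ ∈ Lⁿ be such that Z²(μ,μ) = B²(μ,μ) (i.e. H²(μ,μ) = 0). Then the orbit O(μ) is open in Lⁿ for the topology induced by the Euclidean topology of the space of alternating bilinear maps; in particular μ is rigid. -/
set_option synthInstance.maxHeartbeats 400000
set_option maxHeartbeats 1000000

noncomputable section

abbrev E (n : ℕ) : Type := Fin n → ℂ

abbrev Bil (n : ℕ) : Type := E n →L[ℂ] E n →L[ℂ] E n

/-- A bilinear map is alternating. -/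
def IsAlt {n : ℕ} (μ : Bil n) : Prop := ∀ X, μ X X = 0

/-- The Jacobi identity. -/
def Jacobi {n : ℕ} (μ : Bil n) : Prop :=
  ∀ X Y Z, μ X (μ Y Z) + μ Y (μ Z X) + μ Z (μ X Y) = 0

/-- `Lⁿ`, the set of Lie algebra laws on `ℂⁿ`. -/
def LieLaw (n : ℕ) : Set (Bil n) := {μ | IsAlt μ ∧ Jacobi μ}

/-- The orbit of a law under the action `(f*μ)(X,Y) = f⁻¹(μ(f X, f Y))` of `GL(n,ℂ)`. -/
def orbit {n : ℕ} (μ : Bil n) : Set (Bil n) :=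
  {ν | ∃ f : E n ≃L[ℂ] E n, ∀ X Y, ν X Y = f.symm (μ (f X) (f Y))}

/-- The Gerstenhaber trilinear product `(φ∘ψ)(X,Y,Z)`. -/
def circ {n : ℕ} (φ ψ : Bil n) (X Y Z : E n) : E n :=
  φ (ψ X Y) Z + φ (ψ Y Z) X + φ (ψ Z X) Y

/-- `Z²(μ,μ)`: alternating 2-cochains with `δ_μφ = μ∘φ + φ∘μ = 0`. -/
def Z2 {n : ℕ} (μ : Bil n) : Set (Bil n) :=
  {φ | IsAlt φ ∧ ∀ X Y Z, circ μ φ X Y Z + circ φ μ X Y Z = 0}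

/-- The coboundary `δ_μ g`, for `g` an endomorphism:
`(δ_μ g)(X,Y) = −g(μ(X,Y)) + μ(g X, Y) + μ(X, g Y)`. -/
def delta1 {n : ℕ} (μ : Bil n) (g : E n →L[ℂ] E n) : Bil n :=
  μ.comp g + (μ.flip.comp g).flip -
    (ContinuousLinearMap.compL ℂ (E n) (E n) (E n) g).comp μ

lemma delta1_apply {n : ℕ} (μ : Bil n) (g : E n →L[ℂ] E n) (X Y : E n) :
    delta1 μ g X Y = -g (μ X Y) + μ (g X) Y + μ X (g Y) := by
  simp [delta1]; ring

/-- `B²(μ,μ)`, the set of coboundaries. -/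
def B2 {n : ℕ} (μ : Bil n) : Set (Bil n) := Set.range (delta1 μ)

/-- `f*μ`, defined using `Ring.inverse` so that it is defined for any `f`
(it agrees with the natural action when `f` is invertible). -/
def conj {n : ℕ} (f : E n →L[ℂ] E n) (μ : Bil n) : Bil n :=
  (((((ContinuousLinearMap.compL ℂ (E n) (E n) (E n) (Ring.inverse f)).comp μ).flip).comp
    f).flip).comp f

lemma conj_apply {n : ℕ} (f : E n →L[ℂ] E n) (μ : Bil n) (X Y : E n) :
    conj f μ X Y = Ring.inverse f (μ (f X) (f Y)) := rfl

/-!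
The maps `f ↦ f*μ` and `ν ↦ ν∘ν` have the coboundary operators `g ↦ δ_μ g` and `φ ↦ δ_μ φ` as
derivatives at `1` and at `μ`, and their composite vanishes on invertible `f`, because `f*μ` is
again a Lie algebra law. The hypothesis `H²(μ,μ) = 0` says that these derivatives are exact on
alternating maps, and in finite dimension exactness passes from the derivatives to the maps
themselves. Indeed, let `P` be a projection onto `B²(μ,μ)`. By the open mapping property of
submersions, `P(f*μ)` takes every value near `P μ` as `f` runs through a neighbourhood of `1`. On
the other hand `δ_μ` is injective on the alternating maps in `ker P`, so `ν ↦ ν∘ν` separates the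
alternating maps `ν` near `μ` that share the same `P ν`. A law `ν` near `μ` therefore equals the
`f*μ` with `P(f*μ) = P ν`. Transport of structure carries this from `μ` to the other points of its
orbit.
-/

set_option maxSynthPendingDepth 3

open Filter Set Submodule
open scoped NNReal Topology

section LocalExactness

variable {𝕜 : Type*} [NontriviallyNormedField 𝕜] [CompleteSpace 𝕜]
  {E₁ : Type*} [NormedAddCommGroup E₁] [NormedSpace 𝕜 E₁]
  {E₂ : Type*} [NormedAddCommGroup E₂] [NormedSpace 𝕜 E₂]
  {E₃ : Type*} [NormedAddCommGroup E₃] [NormedSpace 𝕜 E₃]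

theorem exists_pos_norm_le_mul_of_disjoint_ker (L : E₂ →L[𝕜] E₃) (T : Submodule 𝕜 E₂)
    [FiniteDimensional 𝕜 T] (hT : Disjoint T L.ker) :
    ∃ K : ℝ≥0, 0 < K ∧ ∀ d ∈ T, ‖d‖ ≤ K * ‖L d‖ := by
  have hker : (L ∘L T.subtypeL).ker = ⊥ :=
    LinearMap.ker_eq_bot'.2 fun d hd => Subtype.ext (LinearMap.disjoint_ker.1 hT d d.2 hd)
  obtain ⟨K, hK, hanti⟩ := LinearMap.exists_antilipschitzWith _ hker
  exact ⟨K, hK, fun d hd => hanti.le_mul_norm (map_zero _) (⟨d, hd⟩ : T)⟩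

theorem exists_mem_nhds_eq_of_sub_mem {g : E₂ → E₃} {g' : E₂ →L[𝕜] E₃} {b : E₂}
    (hg : HasStrictFDerivAt g g' b) (T : Submodule 𝕜 E₂) [FiniteDimensional 𝕜 T]
    (hT : Disjoint T g'.ker) :
    ∃ N ∈ 𝓝 b, ∀ y ∈ N, ∀ z ∈ N, y - z ∈ T → g y = g z → y = z := by
  obtain ⟨K, hK, hlower⟩ := exists_pos_norm_le_mul_of_disjoint_ker g' T hT
  obtain ⟨N, hN, happrox⟩ := hg.approximates_deriv_on_nhds (c := (2 * K)⁻¹)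
    (Or.inr (by positivity))
  refine ⟨N, hN, fun y hy z hz hyz heq => ?_⟩
  have hupper : ‖g' (y - z)‖ ≤ (2 * K : ℝ)⁻¹ * ‖y - z‖ := by
    simpa [heq, norm_sub_rev] using happrox y hy z hz
  have hhalf : ‖y - z‖ ≤ ‖y - z‖ / 2 := calc
    ‖y - z‖ ≤ K * ‖g' (y - z)‖ := hlower _ hyz
    _ ≤ K * ((2 * K : ℝ)⁻¹ * ‖y - z‖) := by gcongr
    _ = ‖y - z‖ / 2 := by field_simp
  have hzero : ‖y - z‖ ≤ 0 := by linarith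
  exact sub_eq_zero.1 (norm_le_zero_iff.1 hzero)

theorem map_nhds_eq_nhdsWithin_of_exact [CompleteSpace E₁] [FiniteDimensional 𝕜 E₂]
    {f : E₁ → E₂} {g : E₂ → E₃} {f' : E₁ →L[𝕜] E₂} {g' : E₂ →L[𝕜] E₃} {a : E₁}
    (hf : HasStrictFDerivAt f f' a) (hg : HasStrictFDerivAt g g' (f a)) (S : Submodule 𝕜 E₂)
    (hS : ∀ᶠ x in 𝓝 a, f x ∈ S) (hgf : ∀ᶠ x in 𝓝 a, g (f x) = g (f a))
    (hexact : S ⊓ g'.ker ≤ f'.range) :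
    map f (𝓝 a) = 𝓝[S ∩ g ⁻¹' {g (f a)}] f a := by
  refine le_antisymm (tendsto_nhdsWithin_iff.2 ⟨hf.continuousAt, hS.and hgf⟩) ?_
  have : CompleteSpace f'.range := FiniteDimensional.complete 𝕜 _
  obtain ⟨P, hP⟩ := ClosedComplemented.of_finiteDimensional_quotient
    f'.range.closed_of_finiteDimensional
  have hsurj : (P ∘L f').range = ⊤ :=
    LinearMap.range_eq_top.2 fun ⟨_, x, hx⟩ => ⟨x, by subst hx; exact hP ⟨f' x, x, rfl⟩⟩
  have hopen : map (fun x => P (f x)) (𝓝 a) = 𝓝 (P (f a)) :=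
    (P.hasStrictFDerivAt.comp a hf).map_nhds_eq_of_surj hsurj
  have hdisj : Disjoint (S ⊓ P.ker) g'.ker := by
    refine Submodule.disjoint_def.2 fun y ⟨hyS, hyP⟩ hyg => ?_
    have hy : P y = ⟨y, hexact ⟨hyS, hyg⟩⟩ := hP ⟨y, _⟩
    exact congrArg Subtype.val (hy.symm.trans hyP)
  obtain ⟨N, hN, hinj⟩ := exists_mem_nhds_eq_of_sub_mem hg (S ⊓ P.ker) hdisj
  intro U hU
  have himage : (fun x => P (f x)) ''
      {x | f x ∈ U ∧ f x ∈ S ∧ g (f x) = g (f a) ∧ f x ∈ N} ∈ 𝓝 (P (f a)) :=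
    hopen ▸ image_mem_map (inter_mem hU (hS.and (hgf.and (hf.continuousAt hN))))
  rw [mem_nhdsWithin_iff_eventually]
  filter_upwards [hN, P.continuous.continuousAt himage]
    with y hyN ⟨x, ⟨hxU, hxS, hxg, hxN⟩, hxy⟩ ⟨hyS, hyg⟩
  have hsub : y - f x ∈ S ⊓ P.ker :=
    ⟨S.sub_mem hyS hxS, by simpa [sub_eq_zero] using hxy.symm⟩
  have hyx : y = f x := hinj y hyN _ hxN hsub (hyg.trans hxg.symm)
  exact hyx ▸ hxU

end LocalExactness

/-- Bilinear maps `V × V → V` in curried form, with the operator norm; for `V = ℂⁿ` this is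
`Bil n`. -/
abbrev BilinearLaw (𝕜 V : Type*) [NontriviallyNormedField 𝕜] [NormedAddCommGroup V]
    [NormedSpace 𝕜 V] : Type _ :=
  V →L[𝕜] V →L[𝕜] V

namespace BilinearLaw

variable {𝕜 V : Type*} [NontriviallyNormedField 𝕜] [NormedAddCommGroup V] [NormedSpace 𝕜 V]

variable (𝕜 V) in
/-- The space of 2-cochains with values in the adjoint module, i.e. of alternating maps. -/
def alternating : Submodule 𝕜 (BilinearLaw 𝕜 V) where
  carrier := {φ | ∀ X, φ X X = 0}
  add_mem' hφ hψ X := by simp [hφ X, hψ X]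
  zero_mem' X := by simp
  smul_mem' t φ hφ X := by simp [hφ X]

theorem apply_swap_of_mem_alternating {φ : BilinearLaw 𝕜 V} (hφ : φ ∈ alternating 𝕜 V)
    (X Y : V) : φ X Y = -φ Y X :=
  (LinearMap.IsAlt.neg (B := φ.toLinearMap₁₂) hφ Y X).symm

variable (𝕜 V) in
/-- The set of Lie algebra laws on `V`. -/
def lieLaws : Set (BilinearLaw 𝕜 V) :=
  {φ | (∀ X, φ X X = 0) ∧ ∀ X Y Z, φ X (φ Y Z) + φ Y (φ Z X) + φ Z (φ X Y) = 0}

/-- The isomorphism class of `μ`: all laws `f⁻¹(μ(f X, f Y))` with `f` invertible. -/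
def orbit (μ : BilinearLaw 𝕜 V) : Set (BilinearLaw 𝕜 V) :=
  {ν | ∃ f : V ≃L[𝕜] V, ∀ X Y, ν X Y = f.symm (μ (f X) (f Y))}

variable (𝕜 V) in
/-- The cyclic rotation `A ↦ ((X, Y, Z) ↦ A(Y, Z, X))` of the arguments of a trilinear map. -/
def rotate : (V →L[𝕜] BilinearLaw 𝕜 V) →L[𝕜] V →L[𝕜] BilinearLaw 𝕜 V :=
  (ContinuousLinearMap.flipₗᵢ 𝕜 V V (V →L[𝕜] V) : _ →L[𝕜] _) ∘L
    ContinuousLinearMap.compL 𝕜 V (BilinearLaw 𝕜 V) (BilinearLaw 𝕜 V)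
      (ContinuousLinearMap.flipₗᵢ 𝕜 V V V : _ →L[𝕜] _)

variable (𝕜 V) in
/-- The Gerstenhaber product `(φ, ψ) ↦ φ∘ψ`, as a continuous bilinear map: the sum of the
rotations of `(X, Y, Z) ↦ φ(ψ(X, Y), Z)`. -/
def gerstenhaber : BilinearLaw 𝕜 V →L[𝕜] BilinearLaw 𝕜 V →L[𝕜] V →L[𝕜] BilinearLaw 𝕜 V :=
  ContinuousLinearMap.compL 𝕜 _ _ _ (.id 𝕜 _ + rotate 𝕜 V + rotate 𝕜 V ∘L rotate 𝕜 V) ∘L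
    ContinuousLinearMap.compL 𝕜 V (V →L[𝕜] V) (BilinearLaw 𝕜 V) ∘L
      ContinuousLinearMap.compL 𝕜 V V (V →L[𝕜] V)

theorem gerstenhaber_apply (φ ψ : BilinearLaw 𝕜 V) (X Y Z : V) :
    gerstenhaber 𝕜 V φ ψ X Y Z = φ (ψ X Y) Z + φ (ψ Y Z) X + φ (ψ Z X) Y := rfl

theorem lieLaws_eq_alternating_inter :
    lieLaws 𝕜 V = (alternating 𝕜 V : Set _) ∩ {φ | gerstenhaber 𝕜 V φ φ = 0} := by
  ext φ
  refine and_congr_right fun hφ => ?_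
  have hjacobi (X Y Z : V) : gerstenhaber 𝕜 V φ φ X Y Z =
      -(φ X (φ Y Z) + φ Y (φ Z X) + φ Z (φ X Y)) := by
    rw [gerstenhaber_apply, apply_swap_of_mem_alternating hφ (φ X Y),
      apply_swap_of_mem_alternating hφ (φ Y Z), apply_swap_of_mem_alternating hφ (φ Z X)]
    abel
  simp only [mem_ofPred_eq, ContinuousLinearMap.ext_iff, hjacobi, zero_apply, neg_eq_zero]

/-- The coboundary operator `g ↦ δ_μ g` from endomorphisms to bilinear maps. -/
def coboundaryOne (μ : BilinearLaw 𝕜 V) : (V →L[𝕜] V) →L[𝕜] BilinearLaw 𝕜 V :=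
  ContinuousLinearMap.compL 𝕜 V V (V →L[𝕜] V) μ +
    (ContinuousLinearMap.flipₗᵢ 𝕜 V V V : _ →L[𝕜] _) ∘L
      ContinuousLinearMap.compL 𝕜 V V (V →L[𝕜] V) μ.flip -
    (ContinuousLinearMap.compL 𝕜 V (V →L[𝕜] V) (V →L[𝕜] V)).flip μ ∘L
      ContinuousLinearMap.compL 𝕜 V V V

theorem coboundaryOne_apply (μ : BilinearLaw 𝕜 V) (g : V →L[𝕜] V) (X Y : V) :
    coboundaryOne μ g X Y = μ (g X) Y + μ X (g Y) - g (μ X Y) := rfl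

/-- The coboundary operator `φ ↦ δ_μ φ = μ∘φ + φ∘μ` from bilinear to trilinear maps. -/
def coboundaryTwo (μ : BilinearLaw 𝕜 V) : BilinearLaw 𝕜 V →L[𝕜] V →L[𝕜] BilinearLaw 𝕜 V :=
  gerstenhaber 𝕜 V μ + (gerstenhaber 𝕜 V).flip μ

theorem coboundaryTwo_apply (μ φ : BilinearLaw 𝕜 V) :
    coboundaryTwo μ φ = gerstenhaber 𝕜 V μ φ + gerstenhaber 𝕜 V φ μ := rfl

/-- `Z²(μ, μ)`: alternating bilinear maps `φ` with `δ_μ φ = 0`. -/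
def cocycles (μ : BilinearLaw 𝕜 V) : Submodule 𝕜 (BilinearLaw 𝕜 V) :=
  alternating 𝕜 V ⊓ (coboundaryTwo μ).ker

theorem mem_cocycles_iff {μ φ : BilinearLaw 𝕜 V} : φ ∈ cocycles μ ↔ (∀ X, φ X X = 0) ∧
    ∀ X Y Z, gerstenhaber 𝕜 V μ φ X Y Z + gerstenhaber 𝕜 V φ μ X Y Z = 0 := by
  refine and_congr_right fun _ => ?_
  change coboundaryTwo μ φ = 0 ↔ _
  simp [ContinuousLinearMap.ext_iff, coboundaryTwo_apply]

/-- `B²(μ, μ)`: the coboundaries `δ_μ g` of endomorphisms `g`. -/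
def coboundaries (μ : BilinearLaw 𝕜 V) : Submodule 𝕜 (BilinearLaw 𝕜 V) :=
  (coboundaryOne μ).range

theorem hasStrictFDerivAt_gerstenhaber_self (μ : BilinearLaw 𝕜 V) :
    HasStrictFDerivAt (fun ν => gerstenhaber 𝕜 V ν ν) (coboundaryTwo μ) μ :=
  ((gerstenhaber 𝕜 V).hasStrictFDerivAt_of_bilinear (hasStrictFDerivAt_id μ)
    (hasStrictFDerivAt_id μ)).congr_fderiv <| ContinuousLinearMap.ext fun φ => by
      simp only [coboundaryTwo_apply, add_apply, ContinuousLinearMap.precompR_apply,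
        ContinuousLinearMap.precompL_apply, ContinuousLinearMap.compL_apply,
        ContinuousLinearMap.comp_id, ContinuousLinearMap.id_apply, id]

/-- Transport of structure along `e`, that is `e⁻¹*μ` in terms of the right action `f*μ`. -/
def transport (e : V ≃L[𝕜] V) : BilinearLaw 𝕜 V ≃L[𝕜] BilinearLaw 𝕜 V :=
  e.arrowCongr (e.arrowCongr e)

theorem transport_apply (e : V ≃L[𝕜] V) (μ : BilinearLaw 𝕜 V) (X Y : V) :
    transport e μ X Y = e (μ (e.symm X) (e.symm Y)) := rfl

theorem transport_mem_lieLaws (e : V ≃L[𝕜] V) {μ : BilinearLaw 𝕜 V} (hμ : μ ∈ lieLaws 𝕜 V) :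
    transport e μ ∈ lieLaws 𝕜 V := by
  refine ⟨fun X => by rw [transport_apply, hμ.1, map_zero], fun X Y Z => ?_⟩
  simp only [transport_apply, e.symm_apply_apply, ← map_add]
  rw [hμ.2, map_zero]

theorem transport_transport (e f : V ≃L[𝕜] V) (μ : BilinearLaw 𝕜 V) :
    transport f (transport e μ) = transport (e.trans f) μ := rfl

theorem mem_orbit_iff {μ ν : BilinearLaw 𝕜 V} :
    ν ∈ orbit μ ↔ ∃ e : V ≃L[𝕜] V, transport e ν = μ := by
  refine exists_congr fun e => ⟨fun h => ?_, fun h X Y => ?_⟩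
  · ext X Y
    rw [transport_apply, h]
    simp
  · simp [← h, transport_apply]

theorem mem_orbit_of_transport_mem (e : V ≃L[𝕜] V) {μ ν : BilinearLaw 𝕜 V}
    (h : transport e ν ∈ orbit μ) : ν ∈ orbit μ := by
  obtain ⟨f, hf⟩ := mem_orbit_iff.1 h
  exact mem_orbit_iff.2 ⟨e.trans f, (transport_transport e f ν).symm.trans hf⟩

/-- `f*μ` for an arbitrary endomorphism `f`, with `Ring.inverse f` in place of `f⁻¹`: it is `0` when
`f` is not invertible. -/
def twist (f : V →L[𝕜] V) (μ : BilinearLaw 𝕜 V) : BilinearLaw 𝕜 V :=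
  (ContinuousLinearMap.compL 𝕜 V V V (Ring.inverse f) ∘L μ).bilinearComp f f

theorem twist_one (μ : BilinearLaw 𝕜 V) : twist 1 μ = μ := by
  ext; simp [twist]

theorem twist_unit (u : (V →L[𝕜] V)ˣ) (μ : BilinearLaw 𝕜 V) :
    twist (u : V →L[𝕜] V) μ = transport (ContinuousLinearEquiv.unitsEquiv 𝕜 V u).symm μ := by
  ext X Y
  simp only [twist, Ring.inverse_unit]
  rfl

theorem hasStrictFDerivAt_twist_one [CompleteSpace V] (μ : BilinearLaw 𝕜 V) :
    HasStrictFDerivAt (fun f => twist f μ) (coboundaryOne μ) 1 := by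
  have hid : HasStrictFDerivAt (fun f : V →L[𝕜] V => f) (.id 𝕜 _) 1 := hasStrictFDerivAt_id 1
  have hinv : HasStrictFDerivAt (Ring.inverse : (V →L[𝕜] V) → V →L[𝕜] V)
      (-.id 𝕜 _) 1 :=
    (hasStrictFDerivAt_ringInverse (𝕜 := 𝕜) (1 : (V →L[𝕜] V)ˣ)).congr_fderiv (by ext; simp)
  have hpost := ((ContinuousLinearMap.compL 𝕜 V V V).hasStrictFDerivAt.comp _ hinv).clm_comp
    (hasStrictFDerivAt_const μ _)
  have hflip (ψ : BilinearLaw 𝕜 V) :=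
    (ContinuousLinearMap.flipₗᵢ 𝕜 V V V).toContinuousLinearEquiv.hasStrictFDerivAt (x := ψ)
  refine ((hflip _).comp _ (((hflip _).comp _ (hpost.clm_comp hid)).clm_comp hid)).congr_fderiv ?_
  ext g X Y
  simp only [Ring.inverse_one, LinearIsometryEquiv.coe_toContinuousLinearEquiv,
    ContinuousLinearMap.coe_flipₗᵢ, ContinuousLinearMap.comp_id, ContinuousLinearMap.comp_zero,
    ContinuousLinearMap.comp_neg, zero_add, ContinuousLinearMap.comp_add, add_apply,
    ContinuousLinearMap.comp_apply, ContinuousLinearMap.compL_apply,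
    ContinuousLinearEquiv.coe_coe, ContinuousLinearMap.flip_apply, neg_apply, one_apply_eq_self,
    coboundaryOne_apply]
  abel

theorem twist_mem_lieLaws {f : V →L[𝕜] V} (hf : IsUnit f) {μ : BilinearLaw 𝕜 V}
    (hμ : μ ∈ lieLaws 𝕜 V) : twist f μ ∈ lieLaws 𝕜 V := by
  obtain ⟨u, rfl⟩ := hf
  exact twist_unit u μ ▸ transport_mem_lieLaws _ hμ

theorem twist_mem_orbit {f : V →L[𝕜] V} (hf : IsUnit f) (μ : BilinearLaw 𝕜 V) :
    twist f μ ∈ orbit μ := by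
  obtain ⟨u, rfl⟩ := hf
  refine ⟨ContinuousLinearEquiv.unitsEquiv 𝕜 V u, fun X Y => ?_⟩
  rw [twist_unit]
  rfl

variable [CompleteSpace 𝕜] [FiniteDimensional 𝕜 V]

theorem map_twist_nhds_one {μ : BilinearLaw 𝕜 V} (hμ : μ ∈ lieLaws 𝕜 V)
    (hH : cocycles μ ≤ coboundaries μ) :
    map (fun f => twist f μ) (𝓝 1) = 𝓝[lieLaws 𝕜 V] μ := by
  have : CompleteSpace V := FiniteDimensional.complete 𝕜 V
  have hlaw : ∀ᶠ f in 𝓝 (1 : V →L[𝕜] V), twist f μ ∈ lieLaws 𝕜 V :=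
    mem_of_superset (Units.isOpen.mem_nhds isUnit_one) fun f hf => twist_mem_lieLaws hf hμ
  rw [lieLaws_eq_alternating_inter] at hμ hlaw ⊢
  have hmap := map_nhds_eq_nhdsWithin_of_exact (hasStrictFDerivAt_twist_one μ)
    (g := fun ν => gerstenhaber 𝕜 V ν ν) (g' := coboundaryTwo μ)
    (by simpa only [twist_one] using hasStrictFDerivAt_gerstenhaber_self μ)
    (alternating 𝕜 V) (hlaw.mono fun _ h => h.1)
    (hlaw.mono fun _ h => h.2.trans (by simpa only [twist_one] using hμ.2.symm)) hH
  have hjacobi : gerstenhaber 𝕜 V μ μ = 0 := hμ.2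
  simpa only [twist_one, hjacobi, preimage, mem_singleton_iff] using hmap

theorem orbit_mem_nhdsWithin_lieLaws {μ : BilinearLaw 𝕜 V} (hμ : μ ∈ lieLaws 𝕜 V)
    (hH : cocycles μ ≤ coboundaries μ) :
    orbit μ ∈ 𝓝[lieLaws 𝕜 V] μ := by
  have : CompleteSpace V := FiniteDimensional.complete 𝕜 V
  rw [← map_twist_nhds_one hμ hH, mem_map]
  filter_upwards [Units.isOpen.mem_nhds isUnit_one] with f hf using twist_mem_orbit hf μ

end BilinearLaw

open BilinearLaw in
theorem stmt6_general {𝕜 V : Type*} [NontriviallyNormedField 𝕜] [CompleteSpace 𝕜]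
    [NormedAddCommGroup V] [NormedSpace 𝕜 V] [FiniteDimensional 𝕜 V] {μ : BilinearLaw 𝕜 V}
    (hμ : μ ∈ lieLaws 𝕜 V) (hH : cocycles μ ≤ coboundaries μ) :
    IsOpen {ν : lieLaws 𝕜 V | (ν : BilinearLaw 𝕜 V) ∈ orbit μ} := by
  refine isOpen_iff_mem_nhds.2 fun ν hν => ?_
  obtain ⟨e, he⟩ := mem_orbit_iff.1 hν
  have htransport : Tendsto (fun ξ : lieLaws 𝕜 V => transport e ξ) (𝓝 ν) (𝓝[lieLaws 𝕜 V] μ) :=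
    tendsto_nhdsWithin_iff.2 ⟨he ▸ ((transport e).continuous.comp continuous_subtype_val).tendsto ν,
      .of_forall fun ξ => transport_mem_lieLaws e ξ.2⟩
  filter_upwards [htransport (orbit_mem_nhdsWithin_lieLaws hμ hH)] with ξ hξ
  exact mem_orbit_of_transport_mem e hξ

/-- if `Z²(μ,μ) = B²(μ,μ)` (i.e. `H²(μ,μ) = 0`), the orbit `O(μ)` is open
in `Lⁿ` for the induced Euclidean topology; in particular `μ` is rigid. -/
theorem stmt6 (n : ℕ) (μ : Bil n) (hμ : μ ∈ LieLaw n) (h : Z2 μ = B2 μ) :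
    IsOpen {ν : LieLaw n | (ν : Bil n) ∈ orbit μ} :=
  stmt6_general (V := E n) hμ fun _ hφ => h.subset (BilinearLaw.mem_cocycles_iff.1 hφ)
end
end

section
/- Let p ≥ 1 and let μ ∈ L^{2p+1} be a Lie algebra law on ℂ^{2p+1}. If (ℂ^{2p+1}, μ) admits a contact form, then the Heisenberg law h_p lies in the closure of the orbit O(μ) (i.e. h_p is a contraction of μ); conversely, if h_p lies in the closure of O(μ), then (ℂ^{2p+1}, μ) admits a contact form. -/
/-!
Contraction shows that `ω ∧ (dω)^p ≠ 0` holds exactly when `ker ω ∩ ker dω = 0`: if a nonzero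
`X` lies in both kernels, contraction with `X` kills `ω ∧ (dω)^p`, and a form of top degree killed
by a nonzero vector is zero; otherwise `dω` has rank `2p`, and contracting `ω ∧ (dω)^p` with the
Reeb vector `R` (`ω(R) = 1`, `dω(R, ·) = 0`) leaves `(dω)^p`, which is nonzero on a symplectic
basis.

The condition `ker ω ∩ ker dω = 0` is open in the law for a fixed `ω`, and the pullback of forms
transports it along orbits. As `h_p` satisfies it for its last coordinate form, every law having
`h_p` in the closure of its orbit admits a contact form.

Conversely, in a basis made of a symplectic basis of `ker ω` followed by the Reeb vector, a contact
law has the same last coordinate as `h_p`. The dilations `diag(t, …, t, t²)` fix this coordinate of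
the brackets of the first `2p` basis vectors, and all other structure constants tend to `0` with
`t`.
-/

set_option synthInstance.maxHeartbeats 400000
set_option maxHeartbeats 1000000

noncomputable section

open scoped BigOperators

/-- The degree-2 element of the exterior algebra of the dual space associated with a
2-form `β`, expressed in the standard dual basis: `Σ_{i<j} β(e_i,e_j) e^i ∧ e^j`. -/
noncomputable def twoFormEl (n : ℕ) (β : E n → E n → ℂ) :
    ExteriorAlgebra ℂ (Module.Dual ℂ (E n)) :=
  ∑ q ∈ Finset.univ.filter (fun q : Fin n × Fin n => q.1 < q.2),
    β (Pi.single q.1 1) (Pi.single q.2 1) •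
      (ExteriorAlgebra.ι ℂ (LinearMap.proj q.1 : Module.Dual ℂ (E n)) *
        ExteriorAlgebra.ι ℂ (LinearMap.proj q.2 : Module.Dual ℂ (E n)))

/-- `ω` is a contact form on `(ℂ^{2p+1}, μ)`: `ω ∧ (dω)^p ≠ 0`, where
`dω(X,Y) = −ω(μ(X,Y))`. -/
def IsContact {n : ℕ} (μ : Bil n) (ω : Module.Dual ℂ (E n)) (p : ℕ) : Prop :=
  ExteriorAlgebra.ι ℂ ω * (twoFormEl n fun X Y => -ω (μ X Y)) ^ p ≠ 0

/-- The structure constants of the `(2p+1)`-dimensional Heisenberg law `h_p`: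
`h_p(e_{2i+1}, e_{2i+2}) = e_{2p+1}` for `i = 0,…,p−1` (0-indexed: pairs `(2i, 2i+1)`
with value `e_{2p}`), all other brackets of basis vectors being zero. -/
noncomputable def heisC (p : ℕ) (i j : Fin (2 * p + 1)) : E (2 * p + 1) :=
  if (i : ℕ) % 2 = 0 ∧ (j : ℕ) = (i : ℕ) + 1 then Pi.single (Fin.last (2 * p)) 1
  else if (j : ℕ) % 2 = 0 ∧ (i : ℕ) = (j : ℕ) + 1 then -Pi.single (Fin.last (2 * p)) 1
  else 0

/-- The coefficient `J i j` of the standard symplectic matrix, whose diagonal blocks are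
`!![0, 1; -1, 0]` (basis vectors `2k` and `2k + 1` are paired). The indices range over `ℕ` so
that one definition serves all dimensions. -/
def symplecticCoeff (R : Type*) [Ring R] (i j : ℕ) : R :=
  if i % 2 = 0 ∧ j = i + 1 then 1 else if j % 2 = 0 ∧ i = j + 1 then -1 else 0

lemma symplecticCoeff_add_two (R : Type*) [Ring R] (i j : ℕ) :
    symplecticCoeff R (i + 2) (j + 2) = symplecticCoeff R i j := by
  simp only [symplecticCoeff, Nat.add_mod_right, add_right_comm _ 2 1, Nat.add_right_cancel_iff]

lemma symplecticCoeff_two_mul_left (R : Type*) [Ring R] {j k : ℕ} (hj : j ≤ 2 * k) :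
    symplecticCoeff R (2 * k) j = 0 := by
  unfold symplecticCoeff
  grind

lemma symplecticCoeff_two_mul_right (R : Type*) [Ring R] {i k : ℕ} (hi : i ≤ 2 * k) :
    symplecticCoeff R i (2 * k) = 0 := by
  unfold symplecticCoeff
  grind

lemma exists_isUnit_symplecticCoeff (R : Type*) [Ring R] {i k : ℕ} (hi : i < 2 * k) :
    ∃ j < 2 * k, IsUnit (symplecticCoeff R i j) ∧ ∀ i' ≠ i, symplecticCoeff R i' j = 0 := by
  have hone : IsUnit (1 : R) := isUnit_one
  have hneg : IsUnit (-1 : R) := isUnit_one.neg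
  unfold symplecticCoeff
  rcases Nat.even_or_odd' i with ⟨m, rfl | rfl⟩
  · exact ⟨2 * m + 1, by grind⟩
  · exact ⟨2 * m, by grind⟩

section ExteriorAlgebra

open ExteriorAlgebra
open CliffordAlgebra (contractLeft contractLeft_ι contractLeft_ι_mul)

section CommRing

variable {R M : Type*} [CommRing R] [AddCommGroup M] [Module R M]

lemma contractLeft_ι_mul_ι (d : Module.Dual R M) (a b : M) :
    contractLeft d (ι R a * ι R b) = d a • ι R b - d b • ι R a := by
  rw [contractLeft_ι_mul, contractLeft_ι, ← Algebra.commutes, ← Algebra.smul_def]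

lemma ι_mem_exteriorPower_one (a : M) : ι R a ∈ ⋀[R]^1 M := by
  rw [exteriorPower, pow_one]
  exact ⟨a, rfl⟩

lemma ι_mul_ι_mem_exteriorPower_two (a b : M) : ι R a * ι R b ∈ ⋀[R]^2 M :=
  SetLike.mul_mem_graded (ι_mem_exteriorPower_one a) (ι_mem_exteriorPower_one b)

@[elab_as_elim]
lemma exteriorPower_two_induction {P : (Ω : ExteriorAlgebra R M) → Ω ∈ ⋀[R]^2 M → Prop}
    (ι_mul_ι : ∀ a b, P (ι R a * ι R b) (ι_mul_ι_mem_exteriorPower_two a b))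
    (add : ∀ x y hx hy, P x hx → P y hy → P (x + y) (add_mem hx hy))
    {Ω : ExteriorAlgebra R M} (hΩ : Ω ∈ ⋀[R]^2 M) : P Ω hΩ := by
  obtain ⟨_, hP⟩ : ∃ h, P Ω h := by
    have hmul := hΩ
    rw [exteriorPower, pow_two] at hmul
    refine Submodule.mul_induction_on hmul ?_
      fun x y ⟨hx, hPx⟩ ⟨hy, hPy⟩ => ⟨add_mem hx hy, add x y hx hy hPx hPy⟩
    rintro _ ⟨a, rfl⟩ _ ⟨b, rfl⟩
    exact ⟨_, ι_mul_ι a b⟩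
  exact hP

variable {Ω : ExteriorAlgebra R M} (d : Module.Dual R M)

lemma commute_ι_of_mem_exteriorPower_two (hΩ : Ω ∈ ⋀[R]^2 M) (c : M) : Commute Ω (ι R c) := by
  have swap (a b : M) : ι R a * ι R b = -(ι R b * ι R a) :=
    eq_neg_of_add_eq_zero_left (ι_add_mul_swap a b)
  induction hΩ using exteriorPower_two_induction with
  | ι_mul_ι a b =>
    calc ι R a * ι R b * ι R c = -(ι R a * ι R c * ι R b) := by
          rw [mul_assoc, swap b c, mul_neg, mul_assoc]
      _ = ι R c * (ι R a * ι R b) := by rw [swap a c, neg_mul, neg_neg, mul_assoc]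
  | add x y _ _ hx hy => exact hx.add_left hy

lemma exists_contractLeft_eq_ι (hΩ : Ω ∈ ⋀[R]^2 M) : ∃ a, contractLeft d Ω = ι R a := by
  induction hΩ using exteriorPower_two_induction with
  | ι_mul_ι a b => exact ⟨d a • b - d b • a, by simp [contractLeft_ι_mul_ι]⟩
  | add x y _ _ hx hy =>
    obtain ⟨⟨a, ha⟩, ⟨b, hb⟩⟩ := And.intro hx hy
    exact ⟨a + b, by rw [map_add, map_add, ha, hb]⟩

lemma contractLeft_mul_of_mem_exteriorPower_two (hΩ : Ω ∈ ⋀[R]^2 M) (x : ExteriorAlgebra R M) :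
    contractLeft d (Ω * x) = contractLeft d Ω * x + Ω * contractLeft d x := by
  induction hΩ using exteriorPower_two_induction with
  | ι_mul_ι a b =>
    rw [contractLeft_ι_mul_ι, mul_assoc, contractLeft_ι_mul, contractLeft_ι_mul]
    simp only [mul_sub, sub_mul, smul_mul_assoc, mul_smul_comm, mul_assoc]
    abel
  | add y z _ _ hy hz =>
    rw [add_mul, map_add, hy, hz, map_add]
    noncomm_ring

lemma contractLeft_pow_succ (hΩ : Ω ∈ ⋀[R]^2 M) (k : ℕ) :
    contractLeft d (Ω ^ (k + 1)) = (k + 1) • (contractLeft d Ω * Ω ^ k) := by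
  obtain ⟨a, ha⟩ := exists_contractLeft_eq_ι d hΩ
  induction k with
  | zero => simp
  | succ k ih =>
    rw [pow_succ', contractLeft_mul_of_mem_exteriorPower_two d hΩ, ih, ha, mul_smul_comm,
      ← mul_assoc, (commute_ι_of_mem_exteriorPower_two hΩ a).eq, mul_assoc, ← pow_succ',
      add_smul (k + 1), one_smul, add_comm]

variable {d}

lemma contractLeft_pow_eq_zero (hΩ : Ω ∈ ⋀[R]^2 M) (hd : contractLeft d Ω = 0) (k : ℕ) :
    contractLeft d (Ω ^ k) = 0 := by
  cases k with
  | zero => simp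
  | succ k => rw [contractLeft_pow_succ d hΩ, hd, zero_mul, smul_zero]

lemma contractLeft_ι_mul_pow (hΩ : Ω ∈ ⋀[R]^2 M) (hd : contractLeft d Ω = 0) (w : M) (k : ℕ) :
    contractLeft d (ι R w * Ω ^ k) = d w • Ω ^ k := by
  rw [contractLeft_ι_mul, contractLeft_pow_eq_zero hΩ hd, mul_zero, sub_zero]

lemma ι_mul_add_ι_mul_ι_pow (hΩ : Ω ∈ ⋀[R]^2 M) (a b : M) (k : ℕ) :
    ι R a * (Ω + ι R a * ι R b) ^ k = ι R a * Ω ^ k := by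
  have hcomm : ι R a * Ω = Ω * ι R a := (commute_ι_of_mem_exteriorPower_two hΩ a).eq.symm
  induction k with
  | zero => simp only [pow_zero]
  | succ k ih =>
    rw [pow_succ', ← mul_assoc, mul_add, ← mul_assoc, ι_sq_zero, zero_mul, add_zero, hcomm,
      mul_assoc, ih, ← mul_assoc, ← hcomm, mul_assoc, ← pow_succ']

end CommRing

section Field

variable {K M : Type*} [Field K] [AddCommGroup M] [Module K M] {Ω : ExteriorAlgebra K M}

lemma exteriorPower_eq_bot_of_finrank_lt [FiniteDimensional K M] {m : ℕ}
    (hm : Module.finrank K M < m) : ⋀[K]^m M = ⊥ := by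
  rw [← ιMulti_span_fixedDegree, Submodule.span_eq_bot]
  rintro _ ⟨v, rfl⟩
  refine AlternatingMap.map_linearDependent _ v fun hv => hm.not_ge ?_
  simpa only [Fintype.card_fin] using hv.fintype_card_le_finrank

lemma ι_mul_pow_eq_zero [FiniteDimensional K M] {p : ℕ} (hM : Module.finrank K M = 2 * p + 1)
    (hΩ : Ω ∈ ⋀[K]^2 M) {d : Module.Dual K M} (hd : d ≠ 0) (hdΩ : contractLeft d Ω = 0)
    {w : M} (hw : d w = 0) : ι K w * Ω ^ p = 0 := by
  obtain ⟨a, ha⟩ : ∃ a, d a = 1 := LinearMap.surjective hd 1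
  have hvol : ι K a * (ι K w * Ω ^ p) ∈ ⋀[K]^(1 + (1 + p • 2)) M :=
    SetLike.mul_mem_graded (ι_mem_exteriorPower_one a)
      (SetLike.mul_mem_graded (ι_mem_exteriorPower_one w) (SetLike.pow_mem_graded p hΩ))
  have hzero : ι K a * (ι K w * Ω ^ p) = 0 := by
    rwa [exteriorPower_eq_bot_of_finrank_lt (by rw [hM, smul_eq_mul]; lia),
      Submodule.mem_bot] at hvol
  calc ι K w * Ω ^ p
      = d a • (ι K w * Ω ^ p) - ι K a * contractLeft d (ι K w * Ω ^ p) := by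
        rw [ha, one_smul, contractLeft_ι_mul_pow hΩ hdΩ, hw, zero_smul, mul_zero, sub_zero]
    _ = 0 := by rw [← contractLeft_ι_mul, hzero, map_zero]

lemma pow_ne_zero_of_symplectic [CharZero K] {k : ℕ} (hΩ : Ω ∈ ⋀[K]^2 M)
    (d : ℕ → Module.Dual K M)
    (hd : ∀ i < 2 * k, ∀ j < 2 * k,
      contractLeft (d j) (contractLeft (d i) Ω) = algebraMap K _ (symplecticCoeff K i j)) :
    Ω ^ k ≠ 0 := by
  induction k generalizing Ω d with
  | zero => simp
  | succ k ih =>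
    obtain ⟨a, ha⟩ := exists_contractLeft_eq_ι (d 0) hΩ
    obtain ⟨b, hb⟩ := exists_contractLeft_eq_ι (d 1) hΩ
    have hda : ∀ j < 2 * (k + 1), d j a = symplecticCoeff K 0 j := fun j hj => by
      simpa [ha, contractLeft_ι] using hd 0 (by lia) j hj
    have hdb : ∀ j < 2 * (k + 1), d j b = symplecticCoeff K 1 j := fun j hj => by
      simpa [hb, contractLeft_ι] using hd 1 (by lia) j hj
    set Ψ := Ω - ι K a * ι K b
    have hΨ : Ψ ∈ ⋀[K]^2 M := sub_mem hΩ (ι_mul_ι_mem_exteriorPower_two a b)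
    have hdΨ : ∀ j < 2 * (k + 1), contractLeft (d j) Ψ = contractLeft (d j) Ω -
        (symplecticCoeff K 0 j • ι K b - symplecticCoeff K 1 j • ι K a) := fun j hj => by
      rw [map_sub, contractLeft_ι_mul_ι, hda j hj, hdb j hj]
    have h1 : contractLeft (d 1) Ψ = 0 := by simp [hdΨ 1 (by lia), hb, symplecticCoeff]
    have hΨk : Ψ ^ k ≠ 0 := ih hΨ (fun j => d (j + 2)) fun i hi j hj => by
      have hdi : contractLeft (d (i + 2)) Ψ = contractLeft (d (i + 2)) Ω := by
        simp [hdΨ (i + 2) (by lia), symplecticCoeff]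
      rw [hdi, hd _ (by lia) _ (by lia), symplecticCoeff_add_two]
    have hcontract : contractLeft (d 1) (contractLeft (d 0) (Ω ^ (k + 1))) = (k + 1) • Ψ ^ k := by
      have hΩeq : Ω = Ψ + ι K a * ι K b := (sub_add_cancel _ _).symm
      have hd1a : d 1 a = 1 := by simp [hda 1 (by lia), symplecticCoeff]
      rw [contractLeft_pow_succ _ hΩ, ha, hΩeq, ι_mul_add_ι_mul_ι_pow hΨ, map_nsmul,
        contractLeft_ι_mul_pow hΨ h1, hd1a, one_smul]
    intro hΩk
    rw [hΩk, map_zero, map_zero, ← Nat.cast_smul_eq_nsmul K] at hcontract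
    exact smul_ne_zero (Nat.cast_ne_zero.mpr k.succ_ne_zero) hΨk hcontract.symm

end Field

end ExteriorAlgebra

section AlternatingForm

variable {K V : Type*} [Field K] [AddCommGroup V] [Module K V]
  {B : LinearMap.BilinForm K V}

section HyperbolicPair

variable {u w : V}

lemma map_subtype_ker_restrict (hB : B.IsAlt) (huw : B u w = 1) :
    (LinearMap.ker (B.restrict (LinearMap.ker ((B u).prod (B w))))).map
      (Submodule.subtype _) = LinearMap.ker B := by
  have hwu : B w u = -1 := by rw [← hB.neg_eq, huw]
  ext x
  constructor
  · rintro ⟨⟨x, hxW⟩, hx, rfl⟩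
    obtain ⟨hux, hwx⟩ : B u x = 0 ∧ B w x = 0 := by simpa using hxW
    ext y
    have hyW : y - B u y • w + B w y • u ∈ LinearMap.ker ((B u).prod (B w)) := by
      simp [huw, hwu, hB.self_eq_zero]
    have hxy := LinearMap.congr_fun (LinearMap.mem_ker.mp hx) ⟨_, hyW⟩
    simpa [hB.eq_iff.mp hux, hB.eq_iff.mp hwx] using hxy
  · intro hx
    have hx' (y : V) : B x y = 0 := LinearMap.congr_fun hx y
    refine ⟨⟨x, ?_⟩, ?_, rfl⟩
    · simp [hB.eq_iff.mp (hx' _)]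
    · ext y
      simp [hx']

variable [FiniteDimensional K V]

lemma finrank_ker_prod_add_two (hB : B.IsAlt) (huw : B u w = 1) :
    Module.finrank K (LinearMap.ker ((B u).prod (B w))) + 2 = Module.finrank K V := by
  have hwu : B w u = -1 := by rw [← hB.neg_eq, huw]
  have hsurj : Function.Surjective ((B u).prod (B w)) := fun c =>
    ⟨c.1 • w - c.2 • u, by simp [huw, hwu, hB.self_eq_zero]⟩
  rw [← LinearMap.finrank_range_add_finrank_ker ((B u).prod (B w)),
    LinearMap.range_eq_top.mpr hsurj, finrank_top, Module.finrank_prod, Module.finrank_self,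
    add_comm]

lemma finrank_range_restrict_add_two (hB : B.IsAlt) (huw : B u w = 1) :
    Module.finrank K (LinearMap.range (B.restrict (LinearMap.ker ((B u).prod (B w))))) + 2 =
      Module.finrank K (LinearMap.range B) := by
  have hker := Submodule.finrank_map_subtype_eq (LinearMap.ker ((B u).prod (B w)))
    (LinearMap.ker (B.restrict (LinearMap.ker ((B u).prod (B w)))))
  rw [map_subtype_ker_restrict hB huw] at hker
  have := finrank_ker_prod_add_two hB huw
  have := LinearMap.finrank_range_add_finrank_ker B
  have := LinearMap.finrank_range_add_finrank_ker
    (B.restrict (LinearMap.ker ((B u).prod (B w))))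
  lia

end HyperbolicPair

variable [FiniteDimensional K V]

lemma exists_symplectic_seq (hB : B.IsAlt) :
    ∃ k, Module.finrank K (LinearMap.range B) = 2 * k ∧ ∃ v : ℕ → V,
      ∀ i < 2 * k, ∀ j < 2 * k, B (v i) (v j) = symplecticCoeff K i j := by
  induction hr : Module.finrank K (LinearMap.range B) using Nat.strong_induction_on
    generalizing V with | _ r ih
  by_cases hB0 : B = 0
  · exact ⟨0, by simp [← hr, hB0, LinearMap.range_zero], 0, by simp⟩
  obtain ⟨u, hu⟩ : ∃ u, B u ≠ 0 := by
    by_contra! h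
    exact hB0 (LinearMap.ext h)
  obtain ⟨w, huw⟩ : ∃ w, B u w = 1 := LinearMap.surjective hu 1
  have hrank := finrank_range_restrict_add_two hB huw
  set W := LinearMap.ker ((B u).prod (B w))
  obtain ⟨k, hk, v, hv⟩ := ih _ (by lia) (B := B.restrict W) (fun x => hB x) rfl
  have hW (x : W) : B u x = 0 ∧ B w x = 0 := Prod.mk_eq_zero.mp x.2
  have hwu : B w u = -1 := by rw [← hB.neg_eq, huw]
  refine ⟨k + 1, by lia, fun | 0 => u | 1 => w | i + 2 => v i, ?_⟩
  rintro (_ | _ | i) hi (_ | _ | j) hj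
  case succ.succ.succ.succ =>
    rw [symplecticCoeff_add_two, ← hv i (by lia) j (by lia), LinearMap.BilinForm.restrict_apply]
    rfl
  all_goals
    simp [symplecticCoeff, hB.self_eq_zero, huw, hwu, hW, hB.eq_iff.mp (hW _).1,
      hB.eq_iff.mp (hW _).2]

lemma exists_reeb_symplectic_seq {p : ℕ} (hV : Module.finrank K V = 2 * p + 1) (hB : B.IsAlt)
    {ω : Module.Dual K V} (hω : Disjoint (LinearMap.ker ω) (LinearMap.ker B)) :
    ∃ (R : V) (v : ℕ → V), ω R = 1 ∧ B R = 0 ∧ (∀ i, ω (v i) = 0) ∧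
      ∀ i < 2 * p, ∀ j < 2 * p, B (v i) (v j) = symplecticCoeff K i j := by
  obtain ⟨k, hk, v, hv⟩ := exists_symplectic_seq hB
  have hrank := LinearMap.finrank_range_add_finrank_ker B
  obtain ⟨x, hBx, hx⟩ : ∃ x ∈ LinearMap.ker B, x ≠ 0 := by
    refine (Submodule.ne_bot_iff _).mp fun h => ?_
    rw [h, finrank_bot] at hrank
    lia
  have hωx : ω x ≠ 0 := fun h => hx (Submodule.disjoint_def.mp hω x h hBx)
  have hdim : k = p := by
    have := Submodule.finrank_add_finrank_le_of_disjoint hω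
    have := LinearMap.finrank_range_add_finrank_ker ω
    have := (Submodule.finrank_le (LinearMap.range ω)).trans_eq (Module.finrank_self K)
    lia
  subst hdim
  set R := (ω x)⁻¹ • x
  have hωR : ω R = 1 := by rw [map_smul, smul_eq_mul, inv_mul_cancel₀ hωx]
  have hBR : B R = 0 := by rw [map_smul, LinearMap.mem_ker.mp hBx, smul_zero]
  have hBR' (y : V) : B y R = 0 := hB.eq_iff.mp (LinearMap.congr_fun hBR y)
  refine ⟨R, fun i => v i - ω (v i) • R, hωR, hBR, fun i => by simp [hωR], fun i hi j hj => ?_⟩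
  simp [hBR, hBR', hv i hi j hj]

end AlternatingForm

lemma one_sub_add_smul_mul_smul_one_sub_add {R A : Type*} [CommRing R] [Ring A] [Algebra R A]
    {π : A} (hπ : IsIdempotentElem π) (t : R) :
    (1 - π + t • π) * (t • (1 - π) + π) = t • 1 := by
  simp only [mul_add, add_mul, mul_smul_comm, smul_mul_assoc, hπ.eq, hπ.one_sub.eq,
    hπ.mul_one_sub_self, hπ.one_sub_mul_self, smul_zero]
  module

lemma smul_one_sub_add_mul_one_sub_add_smul {R A : Type*} [CommRing R] [Ring A] [Algebra R A]
    {π : A} (hπ : IsIdempotentElem π) (t : R) :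
    (t • (1 - π) + π) * (1 - π + t • π) = t • 1 := by
  simpa [add_comm] using one_sub_add_smul_mul_smul_one_sub_add hπ.one_sub t

lemma sum_lt_add_swap {ι A : Type*} [LinearOrder ι] [Fintype ι] [AddCommMonoid A]
    (g : ι × ι → A) (hg : ∀ i, g (i, i) = 0) :
    ∑ q with q.1 < q.2, (g q + g q.swap) = ∑ q, g q := by
  have hswap : ∑ q : ι × ι with q.1 < q.2, g q.swap = ∑ q with q.2 < q.1, g q :=
    Finset.sum_equiv (Equiv.prodComm ι ι) (by simp) (by simp)
  have hle : ∑ q with q.2 < q.1, g q = ∑ q with ¬ q.1 < q.2, g q := by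
    refine Finset.sum_subset (fun q => by simpa using le_of_lt) fun q hle hlt => ?_
    obtain ⟨i, j⟩ := q
    obtain rfl : i = j := le_antisymm (by simpa using hlt) (by simpa using hle)
    exact hg i
  rw [Finset.sum_add_distrib, hswap, hle, Finset.sum_filter_add_sum_filter_not]

section ContactForm

open ExteriorAlgebra
open CliffordAlgebra (contractLeft contractLeft_ι)

variable {n : ℕ}

lemma twoFormEl_mem_exteriorPower_two (β : E n → E n → ℂ) :
    twoFormEl n β ∈ ⋀[ℂ]^2 (Module.Dual ℂ (E n)) :=
  sum_mem fun _ _ => Submodule.smul_mem _ _ (ι_mul_ι_mem_exteriorPower_two _ _)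

lemma contractLeft_twoFormEl {B : LinearMap.BilinForm ℂ (E n)} (hB : B.IsAlt) (X : E n) :
    contractLeft (Module.Dual.eval ℂ (E n) X) (twoFormEl n fun Y Z => B Y Z) = ι ℂ (B X) := by
  let e (i : Fin n) : E n := Pi.single i 1
  let π (i : Fin n) : Module.Dual ℂ (E n) := LinearMap.proj i
  have hBX : B X = ∑ i, ∑ j, (X i * B (e i) (e j)) • π j := by
    refine (Pi.basisFun ℂ (Fin n)).ext fun k => ?_
    conv_lhs => rw [pi_eq_sum_univ' X]
    simp [e, π, Pi.single_apply, Finset.sum_apply]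
  calc contractLeft (Module.Dual.eval ℂ (E n) X) (twoFormEl n fun Y Z => B Y Z)
      = ∑ q : Fin n × Fin n with q.1 < q.2, ((X q.1 * B (e q.1) (e q.2)) • ι ℂ (π q.2) +
          (X q.2 * B (e q.2) (e q.1)) • ι ℂ (π q.1)) := by
        rw [twoFormEl, map_sum]
        refine Finset.sum_congr rfl fun q _ => ?_
        rw [map_smul, contractLeft_ι_mul_ι, ← hB.neg_eq (e q.1) (e q.2)]
        simp only [Module.Dual.eval_apply, LinearMap.proj_apply, e, π]
        module
    _ = ∑ q : Fin n × Fin n, (X q.1 * B (e q.1) (e q.2)) • ι ℂ (π q.2) :=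
        sum_lt_add_swap _ fun i => by simp [hB.self_eq_zero]
    _ = ι ℂ (B X) := by
        simp only [hBX, map_sum, map_smul, Fintype.sum_prod_type]

/-- The exterior derivative `dω(X, Y) = -ω(μ(X, Y))` of a linear form `ω` in the
Chevalley–Eilenberg complex of `μ`, as a bilinear form. -/
def ceDifferential (μ : Bil n) (ω : Module.Dual ℂ (E n)) : LinearMap.BilinForm ℂ (E n) :=
  -(μ.toLinearMap₁₂.compr₂ ω)

lemma ceDifferential_apply (μ : Bil n) (ω : Module.Dual ℂ (E n)) (X Y : E n) :
    ceDifferential μ ω X Y = -ω (μ X Y) := rfl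

lemma isAlt_ceDifferential {μ : Bil n} (hμ : IsAlt μ) (ω : Module.Dual ℂ (E n)) :
    (ceDifferential μ ω).IsAlt := fun X => by
  rw [ceDifferential_apply, hμ X, map_zero, neg_zero]

lemma isContact_iff_disjoint_ker {p : ℕ} {μ : Bil (2 * p + 1)} (hμ : IsAlt μ)
    (ω : Module.Dual ℂ (E (2 * p + 1))) :
    IsContact μ ω p ↔ Disjoint (LinearMap.ker ω) (LinearMap.ker (ceDifferential μ ω)) := by
  have hfin : Module.finrank ℂ (E (2 * p + 1)) = 2 * p + 1 := Module.finrank_fin_fun ℂ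
  have halt := isAlt_ceDifferential hμ ω
  let Ω := twoFormEl (2 * p + 1) fun X Y => ceDifferential μ ω X Y
  have hΩ : Ω ∈ ⋀[ℂ]^2 (Module.Dual ℂ (E (2 * p + 1))) := twoFormEl_mem_exteriorPower_two _
  have hcontract (X : E (2 * p + 1)) : contractLeft (Module.Dual.eval ℂ _ X) Ω =
    ι ℂ (ceDifferential μ ω X) := contractLeft_twoFormEl halt X
  change ι ℂ ω * Ω ^ p ≠ 0 ↔ _
  constructor
  · intro hcontact
    refine Submodule.disjoint_def.mpr fun X hωX hBX => ?_
    by_contra hX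
    refine hcontact (ι_mul_pow_eq_zero (Subspace.dual_finrank_eq.trans hfin) hΩ
      (d := Module.Dual.eval ℂ _ X) ?_ ?_ hωX)
    · rwa [Ne, Module.eval_apply_eq_zero_iff]
    · rw [hcontract, LinearMap.mem_ker.mp hBX, map_zero]
  · intro hdisj hzero
    obtain ⟨R, v, hωR, hBR, -, hv⟩ := exists_reeb_symplectic_seq hfin halt hdisj
    have hpow : Ω ^ p ≠ 0 := pow_ne_zero_of_symplectic hΩ (fun i => Module.Dual.eval ℂ _ (v i))
      fun i hi j hj => by simp [hcontract, contractLeft_ι, hv i hi j hj]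
    have hRΩ : contractLeft (Module.Dual.eval ℂ _ R) Ω = 0 := by rw [hcontract, hBR, map_zero]
    have hvol := contractLeft_ι_mul_pow hΩ hRΩ ω p
    rw [hzero, map_zero, Module.Dual.eval_apply, hωR, one_smul] at hvol
    exact hpow hvol.symm

lemma isOpen_disjoint_ker (ω : Module.Dual ℂ (E n)) :
    IsOpen {μ : Bil n | Disjoint (LinearMap.ker ω) (LinearMap.ker (ceDifferential μ ω))} := by
  let η : E n →L[ℂ] ℂ := LinearMap.toContinuousLinearMap ω
  let Φ (μ : Bil n) : E n →L[ℂ] ℂ × (E n →L[ℂ] ℂ) :=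
    η.prod (-(ContinuousLinearMap.compL ℂ (E n) (E n) ℂ η ∘L μ))
  have hΦ : Continuous Φ := continuous_clm_apply.mpr fun X => by
    simp only [Φ, ContinuousLinearMap.prod_apply, neg_apply,
      ContinuousLinearMap.comp_apply]
    fun_prop
  have hker (μ : Bil n) (X : E n) : Φ μ X = 0 ↔ ω X = 0 ∧ ceDifferential μ ω X = 0 := by
    rw [LinearMap.ext_iff]
    exact Prod.mk_eq_zero.trans (and_congr_right' ContinuousLinearMap.ext_iff)
  convert ContinuousLinearMap.isOpen_injective.preimage hΦ using 1
  ext μ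
  simp [Submodule.disjoint_def, injective_iff_map_eq_zero, hker]

lemma exists_disjoint_ker_of_mem_orbit {μ ν : Bil n} (hν : ν ∈ orbit μ) {ω : Module.Dual ℂ (E n)}
    (hω : Disjoint (LinearMap.ker ω) (LinearMap.ker (ceDifferential ν ω))) :
    ∃ η : Module.Dual ℂ (E n),
      Disjoint (LinearMap.ker η) (LinearMap.ker (ceDifferential μ η)) := by
  obtain ⟨f, hf⟩ := hν
  refine ⟨ω ∘ₗ (f.symm : E n →ₗ[ℂ] E n), Submodule.disjoint_def.mpr fun X hωX hBX => ?_⟩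
  have hX : f.symm X = 0 := Submodule.disjoint_def.mp hω _ hωX <| by
    refine LinearMap.ext fun Y => ?_
    rw [ceDifferential_apply, hf, f.apply_symm_apply]
    exact LinearMap.congr_fun (LinearMap.mem_ker.mp hBX) (f Y)
  rwa [EmbeddingLike.map_eq_zero_iff] at hX

lemma orbit_subset_orbit {μ ν : Bil n} (hν : ν ∈ orbit μ) : orbit ν ⊆ orbit μ := by
  obtain ⟨f, hf⟩ := hν
  rintro ξ ⟨g, hg⟩
  exact ⟨g.trans f, fun X Y => by rw [hg, hf]; rfl⟩

/-- The law `(X, Y) ↦ L (μ (P X) (P Y))`. For `L = P⁻¹` this is the action of `P` on `μ`; keeping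
`L` and `P` independent lets one pass to limits in which `P` degenerates. -/
def transform (L P : E n →L[ℂ] E n) (μ : Bil n) : Bil n :=
  ContinuousLinearMap.compL ℂ (E n) (E n) (E n) L ∘L μ.bilinearComp P P

lemma transform_apply (L P : E n →L[ℂ] E n) (μ : Bil n) (X Y : E n) :
    transform L P μ X Y = L (μ (P X) (P Y)) := rfl

lemma transform_mem_orbit {L P : E n →L[ℂ] E n} {c : ℂ} (hc : c ≠ 0) (hPL : P * L = c • 1)
    (hLP : L * P = c • 1) (μ : Bil n) : transform L P μ ∈ orbit μ := by
  have hPL' (X : E n) : P (L X) = c • X := DFunLike.congr_fun hPL X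
  have hLP' (X : E n) : L (P X) = c • X := DFunLike.congr_fun hLP X
  refine ⟨.equivOfInverse (c • P) ((c ^ 2)⁻¹ • L) (fun X => ?_) (fun X => ?_), fun X Y => ?_⟩
  · simp only [smul_apply, map_smul, hLP']
    match_scalars
    field_simp
  · simp only [smul_apply, map_smul, hPL']
    match_scalars
    field_simp
  · simp only [transform_apply, ContinuousLinearEquiv.equivOfInverse_apply,
      ContinuousLinearEquiv.symm_equivOfInverse, smul_apply, map_smul]
    match_scalars
    field_simp

section Heisenberg

variable {p : ℕ} {h : Bil (2 * p + 1)}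

variable (hh : ∀ i j, h (Pi.single i 1) (Pi.single j 1) = heisC p i j)
include hh

lemma heis_single (i j : Fin (2 * p + 1)) : h (Pi.single i 1) (Pi.single j 1) =
    symplecticCoeff ℂ i j • Pi.single (Fin.last (2 * p)) 1 := by
  rw [hh, heisC]
  unfold symplecticCoeff
  split_ifs <;> simp

lemma heis_apply_single (X : E (2 * p + 1)) (j : Fin (2 * p + 1)) : h X (Pi.single j 1) =
    (∑ i, X i * symplecticCoeff ℂ i j) • Pi.single (Fin.last (2 * p)) 1 := by
  conv_lhs => rw [pi_eq_sum_univ' X]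
  simp only [map_sum, map_smul, sum_apply, smul_apply, heis_single hh, smul_smul, Finset.sum_smul]

lemma heis_apply_eq_smul (X Y : E (2 * p + 1)) :
    h X Y = h X Y (Fin.last (2 * p)) • Pi.single (Fin.last (2 * p)) 1 := by
  rw [pi_eq_sum_univ' Y, map_sum, Finset.sum_apply, Finset.sum_smul]
  refine Finset.sum_congr rfl fun j _ => ?_
  simp [heis_apply_single hh, smul_smul]

lemma heis_single_last_left (Y : E (2 * p + 1)) : h (Pi.single (Fin.last (2 * p)) 1) Y = 0 := by
  rw [pi_eq_sum_univ' Y, map_sum]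
  refine Finset.sum_eq_zero fun j _ => ?_
  rw [map_smul, heis_single hh, Fin.val_last, symplecticCoeff_two_mul_left ℂ j.is_le, zero_smul,
    smul_zero]

lemma heis_single_last_right (X : E (2 * p + 1)) : h X (Pi.single (Fin.last (2 * p)) 1) = 0 := by
  rw [heis_apply_single hh, Finset.sum_eq_zero fun i _ => ?_, zero_smul]
  rw [Fin.val_last, symplecticCoeff_two_mul_right ℂ i.is_le, mul_zero]

lemma disjoint_ker_heis : Disjoint
    (LinearMap.ker (LinearMap.proj (Fin.last (2 * p)) : Module.Dual ℂ (E (2 * p + 1))))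
    (LinearMap.ker (ceDifferential h (LinearMap.proj (Fin.last (2 * p))))) := by
  refine Submodule.disjoint_def.mpr fun X hX hBX => funext fun i => ?_
  cases i using Fin.lastCases with
  | last => exact hX
  | cast i =>
    obtain ⟨j, hj, hij, hne⟩ := exists_isUnit_symplecticCoeff ℂ i.isLt
    have hBXj := LinearMap.congr_fun (LinearMap.mem_ker.mp hBX) (Pi.single ⟨j, by lia⟩ 1)
    rw [ceDifferential_apply, heis_apply_single hh,
      Finset.sum_eq_single i.castSucc (fun i' _ hi' => ?_) (by simp)] at hBXj
    · simpa [hij.ne_zero] using hBXj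
    · rw [hne i' (Fin.val_ne_of_ne hi'), mul_zero]

lemma exists_linearMap_pullback_eq_heis {μ : Bil (2 * p + 1)} (hμ : IsAlt μ)
    {ω : Module.Dual ℂ (E (2 * p + 1))}
    (hω : Disjoint (LinearMap.ker ω) (LinearMap.ker (ceDifferential μ ω))) :
    ∃ f : E (2 * p + 1) →ₗ[ℂ] E (2 * p + 1), (∀ X, ω (f X) = X (Fin.last (2 * p))) ∧
      ∀ X Y, ω (μ (f X) (f Y)) = h X Y (Fin.last (2 * p)) := by
  let B : LinearMap.BilinForm ℂ (E (2 * p + 1)) := μ.toLinearMap₁₂.compr₂ ω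
  have hB : B.IsAlt := fun X => by simp [B, hμ X]
  obtain ⟨R, v, hωR, hBR, hωv, hv⟩ := exists_reeb_symplectic_seq (Module.finrank_fin_fun ℂ) hB
    (by rwa [ceDifferential, LinearMap.ker_neg] at hω)
  have hBR' (Y : E (2 * p + 1)) : B Y R = 0 := hB.eq_iff.mp (LinearMap.congr_fun hBR Y)
  let f : E (2 * p + 1) →ₗ[ℂ] E (2 * p + 1) :=
    Fintype.linearCombination ℂ (Fin.snoc (α := fun _ => E (2 * p + 1)) (fun i => v i) R)
  have hf_castSucc (i : Fin (2 * p)) : f (Pi.single i.castSucc 1) = v i := by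
    simp [f, Fintype.linearCombination_apply_single]
  have hf_last : f (Pi.single (Fin.last (2 * p)) 1) = R := by
    simp [f, Fintype.linearCombination_apply_single]
  have hωf : ω ∘ₗ f = LinearMap.proj (Fin.last (2 * p)) := by
    refine (Pi.basisFun ℂ _).ext fun i => ?_
    cases i using Fin.lastCases <;> simp [hf_castSucc, hf_last, hωR, hωv]
  have hBf : B.compl₁₂ f f = h.toLinearMap₁₂.compr₂ (LinearMap.proj (Fin.last (2 * p))) := by
    refine LinearMap.ext_basis (Pi.basisFun ℂ _) (Pi.basisFun ℂ _) fun i j => ?_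
    cases i using Fin.lastCases <;> cases j using Fin.lastCases <;>
      simp [hf_castSucc, hf_last, hBR, hBR', hv, heis_single hh, symplecticCoeff_two_mul_left,
        symplecticCoeff_two_mul_right, le_of_lt]
  exact ⟨f, LinearMap.congr_fun hωf, LinearMap.congr_fun₂ hBf⟩

lemma exists_mem_orbit_apply_last {μ : Bil (2 * p + 1)} (hμ : IsAlt μ)
    {ω : Module.Dual ℂ (E (2 * p + 1))}
    (hω : Disjoint (LinearMap.ker ω) (LinearMap.ker (ceDifferential μ ω))) :
    ∃ ν ∈ orbit μ, ∀ X Y, ν X Y (Fin.last (2 * p)) = h X Y (Fin.last (2 * p)) := by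
  obtain ⟨f, hωf, hμf⟩ := exists_linearMap_pullback_eq_heis hh hμ hω
  have hinj : Function.Injective f := by
    refine (injective_iff_map_eq_zero f).mpr fun X hX =>
      Submodule.disjoint_def.mp (disjoint_ker_heis hh) X ?_ (LinearMap.ext fun Y => ?_)
    · rw [LinearMap.mem_ker, LinearMap.proj_apply, ← hωf X, hX, map_zero]
    · simp [ceDifferential_apply, ← hμf, hX]
  let e := (LinearEquiv.ofInjectiveEndo f hinj).toContinuousLinearEquiv
  refine ⟨transform e.symm e μ, ⟨e, fun X Y => rfl⟩, fun X Y => ?_⟩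
  calc transform e.symm e μ X Y (Fin.last (2 * p))
      = ω (e (e.symm (μ (e X) (e Y)))) := (hωf _).symm
    _ = h X Y (Fin.last (2 * p)) := by rw [e.apply_symm_apply]; exact hμf X Y

lemma mem_closure_orbit_of_apply_last {ν : Bil (2 * p + 1)}
    (hν : ∀ X Y, ν X Y (Fin.last (2 * p)) = h X Y (Fin.last (2 * p))) :
    h ∈ closure (orbit ν) := by
  let π : E (2 * p + 1) →L[ℂ] E (2 * p + 1) :=
    (ContinuousLinearMap.proj (Fin.last (2 * p))).smulRight (Pi.single (Fin.last (2 * p)) 1)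
  have hπ : IsIdempotentElem π := by ext; simp [π]
  let P (t : ℂ) := (1 - π) + t • π
  let Q (t : ℂ) := t • (1 - π) + π
  have hcont : Continuous fun t => transform (Q t) (P t) ν :=
    continuous_clm_apply.mpr fun X => continuous_clm_apply.mpr fun Y => by
      simp only [transform_apply, P, Q]
      fun_prop
  have hzero : transform (Q 0) (P 0) ν = h := by
    ext1 X
    ext1 Y
    calc transform (Q 0) (P 0) ν X Y = ν ((1 - π) X) ((1 - π) Y) (Fin.last (2 * p)) •
          Pi.single (Fin.last (2 * p)) 1 := by
          simp [transform_apply, P, Q, π]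
      _ = h ((1 - π) X) ((1 - π) Y) := by rw [hν, ← heis_apply_eq_smul hh]
      _ = h X Y := by
          simp [π, heis_single_last_left hh, heis_single_last_right hh]
  have htendsto : Filter.Tendsto (fun t => transform (Q t) (P t) ν) (nhdsWithin 0 {0}ᶜ) (nhds h) :=
    (hcont.tendsto' 0 h hzero).mono_left nhdsWithin_le_nhds
  refine mem_closure_of_tendsto htendsto ?_
  filter_upwards [self_mem_nhdsWithin] with t ht
  exact transform_mem_orbit ht (one_sub_add_smul_mul_smul_one_sub_add hπ t)
    (smul_one_sub_add_mul_one_sub_add_smul hπ t) ν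

end Heisenberg

end ContactForm

theorem stmt8_general (p : ℕ) (μ : Bil (2 * p + 1)) (hμ : IsAlt μ) (h : Bil (2 * p + 1))
    (hh : ∀ i j : Fin (2 * p + 1), h (Pi.single i 1) (Pi.single j 1) = heisC p i j) :
    (∃ ω : Module.Dual ℂ (E (2 * p + 1)), IsContact μ ω p) ↔ h ∈ closure (orbit μ) := by
  simp only [isContact_iff_disjoint_ker hμ]
  constructor
  · rintro ⟨ω, hω⟩
    obtain ⟨ν, hνμ, hν⟩ := exists_mem_orbit_apply_last hh hμ hω
    exact closure_mono (orbit_subset_orbit hνμ) (mem_closure_orbit_of_apply_last hh hν)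
  · intro hcl
    obtain ⟨ν, hν, hνμ⟩ := mem_closure_iff.mp hcl _ (isOpen_disjoint_ker _) (disjoint_ker_heis hh)
    exact exists_disjoint_ker_of_mem_orbit hνμ hν

/-- a `(2p+1)`-dimensional Lie algebra law `μ` admits a contact form iff the
Heisenberg law `h_p` lies in the closure of the orbit of `μ` (i.e. `h_p` is a contraction
of `μ`). -/
theorem stmt8 (p : ℕ) (hp : 1 ≤ p) (μ : Bil (2 * p + 1)) (hμ : μ ∈ LieLaw (2 * p + 1))
    (h : Bil (2 * p + 1))
    (hh : ∀ i j : Fin (2 * p + 1), h (Pi.single i 1) (Pi.single j 1) = heisC p i j) :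
    (∃ ω : Module.Dual ℂ (E (2 * p + 1)), IsContact μ ω p) ↔ h ∈ closure (orbit μ) := by
  exact stmt8_general p μ hμ.1 h hh
end
end

section
/- Let K be a field and A a K-algebra which is a valuation ring with maximal ideal m, whose residue field equals K via the composite K → A → A/m. For every pair (a₁, a₂) ∈ m × m with a₁ ≠ 0 and a₂ ≠ 0, there exist linearly independent vectors V₁, V₂ in the K-vector space K² and elements a, b ∈ m such that (a₁, a₂) = a·V₁ + a·b·V₂ in A² (K² being regarded inside A² via the structure map). -/
/-!
In a valuation ring one coordinate of the pair divides the other; factor it out as `a`. The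
remaining vector has an entry `1` and an entry `c`, and since `K` surjects onto the residue field,
`c` is a constant `k` up to some `b ∈ m`. So the vector is `V₁ + b • V₂`, where `V₁` has entries `1`
and `k`, and `V₂` is the unit vector in the coordinate of `c`.
-/

open IsLocalRing

theorem linearIndependent_pair_of_isRightRegular {R ι : Type*} [Ring R] {v w : ι → R} {i j : ι}
    (hv : IsRightRegular (v i)) (hwi : w i = 0) (hwj : IsRightRegular (w j)) :
    LinearIndependent R ![v, w] := by
  refine LinearIndependent.pair_iff.mpr fun s t hst ↦ ?_
  have hs : s = 0 := hv.mul_right_eq_zero_iff.mp <| by simpa [hwi] using congrFun hst i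
  have ht : t = 0 := hwj.mul_right_eq_zero_iff.mp <| by simpa [hs] using congrFun hst j
  exact ⟨hs, ht⟩

theorem exists_sub_algebraMap_mem_maximalIdeal {R A : Type*} [CommSemiring R] [CommRing A]
    [IsLocalRing A] [Algebra R A]
    (hres : Function.Surjective ((residue A).comp (algebraMap R A))) (c : A) :
    ∃ k : R, c - algebraMap R A k ∈ maximalIdeal A := by
  obtain ⟨k, hk⟩ := hres (residue A c)
  refine ⟨k, (residue_eq_zero_iff _).mp ?_⟩
  rw [map_sub, sub_eq_zero]
  exact hk.symm

theorem exists_linearIndependent_pair_of_dvd {R A : Type*} [CommRing R] [CommRing A]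
    [IsLocalRing A] [Algebra R A]
    (hres : Function.Surjective ((residue A).comp (algebraMap R A)))
    {v : Fin 2 → A} {i j : Fin 2} (hij : i ≠ j) (hdvd : v i ∣ v j) :
    ∃ V₁ V₂ : Fin 2 → R, ∃ b ∈ maximalIdeal A, LinearIndependent R ![V₁, V₂] ∧
      ∀ l, v l = v i * algebraMap R A (V₁ l) + v i * b * algebraMap R A (V₂ l) := by
  obtain ⟨c, hc⟩ := hdvd
  obtain ⟨k, hk⟩ := exists_sub_algebraMap_mem_maximalIdeal hres c
  refine ⟨Function.update 1 j k, Pi.single j 1, c - algebraMap R A k, hk, ?_, fun l ↦ ?_⟩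
  · apply linearIndependent_pair_of_isRightRegular (i := i) (j := j)
    · rw [Function.update_of_ne hij]
      exact isRegular_one.right
    · exact Pi.single_eq_of_ne hij 1
    · rw [Pi.single_eq_same]
      exact isRegular_one.right
  · obtain rfl | rfl : l = i ∨ l = j := by lia
    · simp [hij]
    · simp only [hc, Function.update_self, Pi.single_eq_same, map_one]
      ring

theorem stmt15_general {R A : Type*} [CommRing R] [CommRing A] [Nontrivial A]
    [PreValuationRing A] [Algebra R A]
    (hres : Function.Surjective ((residue A).comp (algebraMap R A))) (v : Fin 2 → A) :
    ∃ (i : Fin 2) (V₁ V₂ : Fin 2 → R), ∃ b ∈ maximalIdeal A, LinearIndependent R ![V₁, V₂] ∧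
      ∀ l, v l = v i * algebraMap R A (V₁ l) + v i * b * algebraMap R A (V₂ l) := by
  rcases ValuationRing.dvd_total (v 0) (v 1) with hdvd | hdvd
  · exact ⟨0, exists_linearIndependent_pair_of_dvd hres zero_ne_one hdvd⟩
  · exact ⟨1, exists_linearIndependent_pair_of_dvd hres one_ne_zero hdvd⟩

/-- in a valuation ring `A` which is a `K`-algebra whose residue field is
`K` itself (via `K → A → A/m`), every pair `(a₁, a₂) ∈ m × m` of nonzero elements can be
written `(a₁, a₂) = a·V₁ + a·b·V₂` with `a, b ∈ m` and `V₁, V₂` linearly independent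
vectors of `K²` (regarded inside `A²` via the structure map). -/
theorem stmt15 (K : Type*) [Field K] (A : Type*) [CommRing A] [IsDomain A]
    [ValuationRing A] [Algebra K A]
    (hres : Function.Bijective
      ((IsLocalRing.residue A).comp (algebraMap K A) : K →+* IsLocalRing.ResidueField A))
    (a₁ a₂ : A) (h₁ : a₁ ∈ IsLocalRing.maximalIdeal A) (h₂ : a₂ ∈ IsLocalRing.maximalIdeal A)
    (h₁0 : a₁ ≠ 0) (h₂0 : a₂ ≠ 0) :
    ∃ (V₁ V₂ : Fin 2 → K) (a b : A),
      LinearIndependent K ![V₁, V₂] ∧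
      a ∈ IsLocalRing.maximalIdeal A ∧ b ∈ IsLocalRing.maximalIdeal A ∧
      ∀ i : Fin 2, ![a₁, a₂] i =
        a * algebraMap K A (V₁ i) + a * b * algebraMap K A (V₂ i) := by
  obtain ⟨i, V₁, V₂, b, hb, hV, h⟩ := stmt15_general hres.surjective ![a₁, a₂]
  exact ⟨V₁, V₂, ![a₁, a₂] i, b, hV, by fin_cases i <;> assumption, hb, h⟩
end

section
/- Let K be a field and A a K-algebra which is a valuation ring with maximal ideal m, whose residue field equals K via the composite K → A → A/m. For every nonzero (a₁,…,a_k) ∈ mᵏ there exist an integer h with 1 ≤ h ≤ k, linearly independent vectors V₁,…,V_h in the K-vector space Kᵏ, and elements b₁,…,b_h ∈ m such that (a₁,…,a_k) = b₁·V₁ + b₁b₂·V₂ + ⋯ + b₁b₂⋯b_h·V_h in Aᵏ. -/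
/-!
Divisibility in `A` is total, so some entry `a i₀` of a nonzero vector `a` divides all the others.
Dividing by `b₁ = a i₀` gives a vector with a `1` at `i₀`; lift its reduction modulo the ideal `I`
(the maximal ideal, in the case of a valuation ring with residue field `K`) to a vector `V₁` over
`K`, so that `a = b₁ (V₁ + a')` with the entries of `a'` again in `I`. The lift can be chosen exact
at `i₀` and at every zero of `a`, so `a'` has smaller support than `a` and the same step applies to
it. All later vectors vanish at `i₀`, where `V₁` has entry `1`, whence the linear independence.
-/

open Function Finset

section BigOperators

variable {M A : Type*} {n : ℕ}

theorem prod_Iic_fin_succ [CommMonoid M] (f : Fin (n + 1) → M) (j : Fin n) :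
    ∏ l ∈ Iic j.succ, f l = f 0 * ∏ l ∈ Iic j, f l.succ := by
  rw [← Icc_bot, bot_eq_zero, ← mul_prod_Ioc_eq_prod_Icc (Fin.zero_le _),
    ← Fin.map_succEmb_Iic, prod_map]
  rfl

theorem sum_prod_Iic_mul_fin_succ [CommSemiring A] (b w : Fin (n + 1) → A) :
    ∑ j, (∏ l ∈ Iic j, b l) * w j =
      b 0 * (w 0 + ∑ j : Fin n, (∏ l ∈ Iic j, b l.succ) * w j.succ) := by
  have prod_Iic_zero : ∏ l ∈ Iic (0 : Fin (n + 1)), b l = b 0 := by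
    rw [← bot_eq_zero, Iic_bot, prod_singleton]
  simp only [Fin.sum_univ_succ, prod_Iic_zero, prod_Iic_fin_succ, mul_assoc, mul_add, mul_sum]

end BigOperators

theorem linearIndependent_finCons_of_apply_eq_zero {R M : Type*} [Ring R] [AddCommGroup M]
    [Module R M] {n : ℕ} {x : M} {v : Fin n → M} (f : M →ₗ[R] R) (hx : IsRightRegular (f x))
    (hv : ∀ j, f (v j) = 0) (hli : LinearIndependent R v) :
    LinearIndependent R (Fin.cons x v : Fin (n + 1) → M) := by
  have span_le_ker : Submodule.span R (Set.range v) ≤ LinearMap.ker f :=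
    Submodule.span_le.2 (Set.range_subset_iff.2 hv)
  refine hli.finCons' x v fun c y hy hcy ↦ ?_
  have hfy : f y = 0 := span_le_ker hy
  exact hx.mul_right_eq_zero_iff.1 (by simpa [hfy] using congrArg f hcy)

theorem exists_forall_dvd_of_finite {ι M : Type*} [Monoid M] [PreValuationRing M] [Finite ι]
    [Nonempty ι] (a : ι → M) : ∃ i₀, ∀ i, a i₀ ∣ a i := by
  have : IsTrans M (fun x y ↦ y ∣ x) := ⟨fun _ _ _ hxy hyz ↦ hyz.trans hxy⟩
  have directed : Directed (fun x y ↦ y ∣ x) a := fun i j ↦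
    (ValuationRing.dvd_total (a i) (a j)).elim (fun h ↦ ⟨i, dvd_rfl, h⟩) fun h ↦ ⟨j, h, dvd_rfl⟩
  exact directed.finite_le id

section Expansion

variable {K A ι : Type*} [CommRing A] {I : Ideal A} {a : ι → A}

theorem exists_sub_algebraMap_mem [CommSemiring K] [Algebra K A]
    (hI : Surjective (algebraMap K (A ⧸ I))) (u : A) :
    ∃ c : K, u - algebraMap K A c ∈ I := by
  obtain ⟨c, hc⟩ := hI (Ideal.Quotient.mk I u)
  exact ⟨c, Ideal.Quotient.eq.1 hc.symm⟩

theorem exists_eq_mul_algebraMap_add [CommSemiring K] [Algebra K A] [PreValuationRing A] [Finite ι]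
    (hI : Surjective (algebraMap K (A ⧸ I))) (ha : a ≠ 0) :
    ∃ (i₀ : ι) (v : ι → K) (a' : ι → A), a i₀ ≠ 0 ∧ v i₀ = 1 ∧ support v ⊆ support a ∧
      support a' ⊆ support a \ {i₀} ∧ (∀ i, a' i ∈ I) ∧
      ∀ i, a i = a i₀ * (algebraMap K A (v i) + a' i) := by
  obtain ⟨i₁, hi₁⟩ := Function.ne_iff.1 ha
  have : Nonempty ι := ⟨i₁⟩
  obtain ⟨i₀, hdvd⟩ := exists_forall_dvd_of_finite a
  have hi₀ : a i₀ ≠ 0 := fun h ↦ hi₁ (zero_dvd_iff.1 (h ▸ hdvd i₁))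
  have hcoord (i : ι) : ∃ (c : K) (x : A), (i = i₀ → c = 1 ∧ x = 0) ∧ (a i = 0 → c = 0 ∧ x = 0) ∧
      x ∈ I ∧ a i = a i₀ * (algebraMap K A c + x) := by
    by_cases hi : i = i₀
    · exact ⟨1, 0, by simp [hi, hi₀]⟩
    by_cases hai : a i = 0
    · exact ⟨0, 0, by simp [hi, hai]⟩
    obtain ⟨u, hu⟩ := hdvd i
    obtain ⟨c, hc⟩ := exists_sub_algebraMap_mem hI u
    exact ⟨c, u - algebraMap K A c, by simp [hi], by simp [hai], hc, by simpa using hu⟩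
  choose v a' hpivot hzero hmem heq using hcoord
  refine ⟨i₀, v, a', hi₀, (hpivot i₀ rfl).1, fun i hi hai ↦ hi (hzero i hai).1, fun i hi ↦ ?_,
    hmem, heq⟩
  exact ⟨fun hai ↦ hi (hzero i hai).2, fun h ↦ hi (hpivot i h).2⟩

theorem exists_linearIndependent_eq_sum_prod_mul [CommRing K] [Algebra K A] [PreValuationRing A]
    [Finite ι] (hI : Surjective (algebraMap K (A ⧸ I))) (ha : ∀ i, a i ∈ I) :
    ∃ (h : ℕ) (V : Fin h → ι → K) (b : Fin h → A),
      LinearIndependent K V ∧ (∀ j, b j ∈ I) ∧ (∀ j, support (V j) ⊆ support a) ∧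
      ∀ i, a i = ∑ j, (∏ l ∈ Iic j, b l) * algebraMap K A (V j i) := by
  induction hs : support a using WellFoundedLT.induction generalizing a with
  | ind s ih =>
  subst hs
  by_cases ha0 : a = 0
  · exact ⟨0, Fin.elim0, Fin.elim0, linearIndependent_empty_type, by simp [ha0]⟩
  obtain ⟨i₀, v, a', hi₀, hv, hva, ha'a, ha', heq⟩ := exists_eq_mul_algebraMap_add hI ha0
  have hlt : support a' ⊂ support a := ha'a.trans_ssubset (Set.sdiff_singleton_ssubset.2 hi₀)
  obtain ⟨h, V, b, hV, hb, hVa', hsum⟩ := ih _ hlt ha' rfl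
  have hV₀ (j : Fin h) : V j i₀ = 0 := notMem_support.1 fun hj ↦ (ha'a (hVa' j hj)).2 rfl
  have hpivot : IsRightRegular (v i₀) := hv ▸ isRegular_one.right
  refine ⟨h + 1, Fin.cons v V, Fin.cons (a i₀) b,
    linearIndependent_finCons_of_apply_eq_zero (LinearMap.proj i₀) hpivot hV₀ hV,
    Fin.cases (ha i₀) hb, Fin.cases hva fun j ↦ (hVa' j).trans hlt.subset, fun i ↦ ?_⟩
  rw [sum_prod_Iic_mul_fin_succ]
  simp only [Fin.cons_zero, Fin.cons_succ, ← hsum i, ← heq i]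

end Expansion

theorem stmt16_general {K A ι : Type*} [CommRing K] [CommRing A] [PreValuationRing A] [Algebra K A]
    [Finite ι] {I : Ideal A} (hI : Surjective (algebraMap K (A ⧸ I))) {a : ι → A}
    (ha : ∀ i, a i ∈ I) (ha0 : a ≠ 0) :
    ∃ (h : ℕ) (_ : 1 ≤ h ∧ h ≤ Nat.card ι) (V : Fin h → ι → K) (b : Fin h → A),
      LinearIndependent K V ∧ (∀ j, b j ∈ I) ∧
      ∀ i, a i = ∑ j, (∏ l ∈ Iic j, b l) * algebraMap K A (V j i) := by
  obtain ⟨h, V, b, hV, hb, -, hsum⟩ := exists_linearIndependent_eq_sum_prod_mul hI ha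
  have h_ne_zero : h ≠ 0 := by
    rintro rfl
    exact ha0 (funext fun i ↦ by simpa using hsum i)
  have h_le_card : h ≤ Nat.card ι := by
    have := Fintype.ofFinite ι
    obtain ⟨i, hi⟩ := Function.ne_iff.1 ha0
    have : Nontrivial A := ⟨⟨_, _, hi⟩⟩
    have : Nontrivial K := (algebraMap K A).domain_nontrivial
    simpa using hV.fintype_card_le_finrank
  exact ⟨h, ⟨Nat.one_le_iff_ne_zero.2 h_ne_zero, h_le_card⟩, V, b, hV, hb, hsum⟩

/-- in a valuation ring `A` which is a `K`-algebra whose residue field is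
`K` itself (via `K → A → A/m`), every nonzero vector `(a₁,…,a_k) ∈ mᵏ` can be written
`b₁·V₁ + b₁b₂·V₂ + ⋯ + b₁b₂⋯b_h·V_h` with `1 ≤ h ≤ k`, the `bᵢ ∈ m`, and `V₁,…,V_h`
linearly independent vectors of `Kᵏ` (regarded inside `Aᵏ` via the structure map). -/
theorem stmt16 (K : Type*) [Field K] (A : Type*) [CommRing A] [IsDomain A]
    [ValuationRing A] [Algebra K A]
    (hres : Function.Bijective
      ((IsLocalRing.residue A).comp (algebraMap K A) : K →+* IsLocalRing.ResidueField A))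
    (k : ℕ) (a : Fin k → A) (hmem : ∀ i, a i ∈ IsLocalRing.maximalIdeal A) (ha : a ≠ 0) :
    ∃ (h : ℕ) (hh : 1 ≤ h ∧ h ≤ k) (V : Fin h → Fin k → K) (b : Fin h → A),
      LinearIndependent K V ∧
      (∀ j, b j ∈ IsLocalRing.maximalIdeal A) ∧
      ∀ i : Fin k, a i = ∑ j : Fin h, (∏ l ∈ Finset.Iic j, b l) * algebraMap K A (V j i) := by
  simpa only [Nat.card_fin] using stmt16_general hres.surjective hmem ha
end

section
/- Let K be a field and A a K-algebra which is a valuation ring with maximal ideal m, whose residue field equals K via the composite K → A → A/m. Suppose a vector of mᵏ admits two decompositions b₁V₁ + b₁b₂V₂ + ⋯ + b₁b₂⋯b_hV_h = c₁W₁ + c₁c₂W₂ + ⋯ + c₁c₂⋯c_sW_s, where b₁,…,b_h, c₁,…,c_s ∈ m are all nonzero and (V₁,…,V_h), (W₁,…,W_s) are linearly independent families in the K-vector space Kᵏ. Then h = s and the two flags coincide: span_K{V₁,…,Vᵢ} = span_K{W₁,…,Wᵢ} for every i = 1,…,h. -/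
/-!
Let `A` be a local `K`-algebra. A functional `φ` on a `K`-vector space `E` extends to `A ⊗ E`, and
sends `x = ∑ⱼ βⱼ ⊗ Vⱼ` to `φ(x) = ∑ⱼ φ(Vⱼ) βⱼ`. When the ideals `(βⱼ)` decrease strictly, the
first `j` with `φ(Vⱼ) ≠ 0` dominates, so `(φ(x)) = (βⱼ)`. If all `βⱼ` are nonzero, `x` alone
determines

* the ideals `(βⱼ)`, in order: they are the nonzero ideals of the form `(φ(x))`, as the `Vⱼ` are
  linearly independent;
* the annihilator of `V₁, …, Vᵢ`, and so their span: it consists of the `φ` with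
  `(φ(x)) < (βᵢ)`.
-/

open IsLocalRing Module
open scoped TensorProduct

section LocalRing

variable {A : Type*} [CommRing A] [IsLocalRing A]

lemma le_span_singleton_mul_maximalIdeal_of_lt {I : Ideal A} {a : A} (h : I < Ideal.span {a}) :
    I ≤ Ideal.span {a} * maximalIdeal A := by
  intro y hy
  obtain ⟨r, rfl⟩ := Ideal.mem_span_singleton.1 (h.le hy)
  refine Ideal.mem_span_singleton_mul.2 ⟨r, fun hr : IsUnit r => h.not_ge ?_, rfl⟩
  rw [← Ideal.span_singleton_mul_right_unit hr]
  exact (Ideal.span_singleton_le_iff_mem I).2 hy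

lemma span_singleton_mul_add_of_isUnit {a u z : A} (hu : IsUnit u)
    (hz : z ∈ Ideal.span {a} * maximalIdeal A) :
    Ideal.span {a * u + z} = Ideal.span {a} := by
  obtain ⟨r, hr, rfl⟩ := Ideal.mem_span_singleton_mul.1 hz
  have hur : IsUnit (u + r) := by
    rw [← notMem_maximalIdeal] at hu ⊢
    rwa [Ideal.add_mem_iff_left _ hr]
  rw [← mul_add, Ideal.span_singleton_mul_right_unit hur]

variable {ι : Type*} [Fintype ι] [LinearOrder ι]

lemma span_sum_mul_eq_of_strictAnti {β : ι → A} (hβ : StrictAnti fun i => Ideal.span {β i})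
    {a : ι → A} {j : ι} (hj : IsUnit (a j)) (hlt : ∀ l < j, a l = 0) :
    Ideal.span {∑ l, β l * a l} = Ideal.span {β j} := by
  rw [← Finset.add_sum_erase _ _ (Finset.mem_univ j)]
  refine span_singleton_mul_add_of_isUnit hj (sum_mem fun l hl => ?_)
  rcases (Finset.ne_of_mem_erase hl).lt_or_gt with hlj | hjl
  · simp [hlt l hlj]
  · exact Ideal.mul_mem_right _ _
      (le_span_singleton_mul_maximalIdeal_of_lt (hβ hjl) (Ideal.mem_span_singleton_self _))

end LocalRing

lemma strictAnti_span_prod_Iic {A ι : Type*} [CommRing A] [IsDomain A] [LinearOrder ι]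
    [LocallyFiniteOrderBot ι] {b : ι → A} (hb : ∀ i, ¬IsUnit (b i)) (hb0 : ∀ i, b i ≠ 0) :
    StrictAnti fun i => Ideal.span {∏ l ∈ Finset.Iic i, b l} := by
  intro i j hij
  have hmem : j ∈ Finset.Iic j \ Finset.Iic i := by simpa using hij
  refine Ideal.span_singleton_lt_span_singleton.2
    ⟨Finset.prod_ne_zero_iff.2 fun l _ => hb0 l, ∏ l ∈ Finset.Iic j \ Finset.Iic i, b l,
      fun hu => hb j (isUnit_of_dvd_unit (Finset.dvd_prod_of_mem b hmem) hu), ?_⟩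
  rw [mul_comm, Finset.prod_sdiff (Finset.Iic_subset_Iic.2 hij.le)]

lemma mem_dualAnnihilator_span_image_iff {R M ι : Type*} [CommSemiring R] [AddCommMonoid M]
    [Module R M] {v : ι → M} {S : Set ι} {φ : Dual R M} :
    φ ∈ (Submodule.span R (v '' S)).dualAnnihilator ↔ ∀ i ∈ S, φ (v i) = 0 := by
  rw [← SetLike.mem_coe, Submodule.coe_dualAnnihilator_span]
  exact Set.image_subset_iff

lemma sum_tmul_eq_sum_tmul_iff_forall {R A ι κ n : Type*} [CommSemiring R] [CommSemiring A]
    [Algebra R A] [Fintype ι] [Fintype κ] [Finite n] {β : ι → A} {V : ι → n → R} {γ : κ → A}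
    {W : κ → n → R} :
    ∑ j, β j ⊗ₜ[R] V j = ∑ j, γ j ⊗ₜ[R] W j ↔
      ∀ i, ∑ j, β j * algebraMap R A (V j i) = ∑ j, γ j * algebraMap R A (W j i) := by
  classical
  have := Fintype.ofFinite n
  rw [← (TensorProduct.piScalarRight R R A n).injective.eq_iff, funext_iff]
  simp [Algebra.smul_def, mul_comm]

section Tensor

variable {K A E ι κ : Type*} [Field K] [CommRing A] [IsLocalRing A] [Algebra K A]
  [AddCommGroup E] [Module K E] [Fintype ι] [LinearOrder ι] [Fintype κ] [LinearOrder κ]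
  {β : ι → A} {V : ι → E} {γ : κ → A} {W : κ → E}

lemma span_baseChange_sum_tmul_eq (hβ : StrictAnti fun i => Ideal.span {β i}) {φ : Dual K E}
    {j : ι} (hj : φ (V j) ≠ 0) (hlt : ∀ l < j, φ (V l) = 0) :
    Ideal.span {φ.baseChange A (∑ l, β l ⊗ₜ[K] V l)} = Ideal.span {β j} := by
  have hφ : φ.baseChange A (∑ l, β l ⊗ₜ[K] V l) = ∑ l, β l * algebraMap K A (φ (V l)) := by
    simp only [map_sum, Dual.baseChange_apply_tmul, Algebra.smul_def, mul_comm]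
  rw [hφ]
  exact span_sum_mul_eq_of_strictAnti hβ (hj.isUnit.map _) fun l hl => by rw [hlt l hl, map_zero]

lemma baseChange_sum_tmul_eq_zero_or_span_eq (hβ : StrictAnti fun i => Ideal.span {β i})
    (V : ι → E) (φ : Dual K E) :
    ((∀ j, φ (V j) = 0) ∧ φ.baseChange A (∑ l, β l ⊗ₜ[K] V l) = 0) ∨
      ∃ j, φ (V j) ≠ 0 ∧ (∀ l < j, φ (V l) = 0) ∧
        Ideal.span {φ.baseChange A (∑ l, β l ⊗ₜ[K] V l)} = Ideal.span {β j} := by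
  by_cases hφ : ∀ j, φ (V j) = 0
  · exact Or.inl ⟨hφ, by simp [hφ]⟩
  · push Not at hφ
    obtain ⟨j, hj, hmin⟩ := wellFounded_lt.has_min {j | φ (V j) ≠ 0} hφ
    have hlt : ∀ l < j, φ (V l) = 0 := fun l hl => not_not.1 fun hne => hmin l hne hl
    exact Or.inr ⟨j, hj, hlt, span_baseChange_sum_tmul_eq hβ hj hlt⟩

lemma range_span_eq_range_span_baseChange_diff (hV : LinearIndependent K V)
    (hβ : StrictAnti fun i => Ideal.span {β i}) (hβ0 : ∀ i, β i ≠ 0) :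
    Set.range (fun i => Ideal.span {β i}) =
      Set.range (fun φ : Dual K E => Ideal.span {φ.baseChange A (∑ l, β l ⊗ₜ[K] V l)}) \ {⊥} := by
  ext I
  constructor
  · rintro ⟨j, rfl⟩
    obtain ⟨φ, hj, hker⟩ :=
      Submodule.exists_le_ker_of_notMem (hV.notMem_span_image (Set.self_notMem_Iio (a := j)))
    have hlt : ∀ l < j, φ (V l) = 0 := fun l hl =>
      hker (Submodule.subset_span (Set.mem_image_of_mem V hl))
    exact ⟨⟨φ, span_baseChange_sum_tmul_eq hβ hj hlt⟩, by simpa using hβ0 j⟩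
  · rintro ⟨⟨φ, rfl⟩, hne⟩
    rcases baseChange_sum_tmul_eq_zero_or_span_eq hβ V φ with ⟨-, h0⟩ | ⟨j, -, -, hj⟩
    · exact absurd (by simp [h0]) hne
    · exact ⟨j, hj.symm⟩

lemma span_baseChange_sum_tmul_lt_iff (hβ : StrictAnti fun i => Ideal.span {β i}) {i : ι}
    (hi : β i ≠ 0) {φ : Dual K E} :
    Ideal.span {φ.baseChange A (∑ l, β l ⊗ₜ[K] V l)} < Ideal.span {β i} ↔
      ∀ j ≤ i, φ (V j) = 0 := by
  rcases baseChange_sum_tmul_eq_zero_or_span_eq hβ V φ with ⟨hφ, h0⟩ | ⟨j, hj, hlt, hspan⟩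
  · simp [hφ, h0, bot_lt_iff_ne_bot, hi]
  · rw [hspan, hβ.lt_iff_gt]
    exact ⟨fun hij l hl => hlt l (hl.trans_lt hij), fun h => not_le.1 fun hji => hj (h j hji)⟩

lemma span_image_Iic_eq_of_sum_tmul_eq (hβ : StrictAnti fun i => Ideal.span {β i})
    (hγ : StrictAnti fun i => Ideal.span {γ i})
    (hsum : ∑ l, β l ⊗ₜ[K] V l = ∑ l, γ l ⊗ₜ[K] W l) {i : ι} {j : κ} (hi : β i ≠ 0)
    (hij : Ideal.span {β i} = Ideal.span {γ j}) :
    Submodule.span K (V '' Set.Iic i) = Submodule.span K (W '' Set.Iic j) := by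
  have hj : γ j ≠ 0 := by
    rwa [Ne, ← Ideal.span_singleton_eq_bot, ← hij, Ideal.span_singleton_eq_bot]
  rw [← Subspace.dualAnnihilator_inj]
  ext φ
  simp only [mem_dualAnnihilator_span_image_iff, Set.mem_Iic]
  rw [← span_baseChange_sum_tmul_lt_iff hβ hi, hsum, hij, span_baseChange_sum_tmul_lt_iff hγ hj]

end Tensor

theorem stmt18_general {K A E : Type*} [Field K] [CommRing A] [IsLocalRing A] [Algebra K A]
    [AddCommGroup E] [Module K E] {h s : ℕ} {V : Fin h → E} {W : Fin s → E}
    (hV : LinearIndependent K V) (hW : LinearIndependent K W) {β : Fin h → A} {γ : Fin s → A}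
    (hβ : StrictAnti fun j => Ideal.span {β j}) (hβ0 : ∀ j, β j ≠ 0)
    (hγ : StrictAnti fun j => Ideal.span {γ j}) (hγ0 : ∀ j, γ j ≠ 0)
    (hsum : ∑ j, β j ⊗ₜ[K] V j = ∑ j, γ j ⊗ₜ[K] W j) :
    h = s ∧ ∀ i : ℕ, i < h →
      Submodule.span K (V '' {j : Fin h | (j : ℕ) ≤ i}) =
        Submodule.span K (W '' {j : Fin s | (j : ℕ) ≤ i}) := by
  have hrange : Set.range (fun j => Ideal.span {β j}) = Set.range (fun j => Ideal.span {γ j}) := by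
    rw [range_span_eq_range_span_baseChange_diff hV hβ hβ0, hsum,
      ← range_span_eq_range_span_baseChange_diff hW hγ hγ0]
  obtain rfl : h = s := by
    simpa only [Set.ncard_range_of_injective hβ.injective,
      Set.ncard_range_of_injective hγ.injective, Nat.card_fin] using congrArg Set.ncard hrange
  refine ⟨rfl, fun i hi => ?_⟩
  have hspan : Ideal.span {β ⟨i, hi⟩} = Ideal.span {γ ⟨i, hi⟩} :=
    congrFun ((hβ.range_inj hγ).1 hrange) ⟨i, hi⟩
  have hIic : {j : Fin h | (j : ℕ) ≤ i} = Set.Iic ⟨i, hi⟩ := rfl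
  rw [hIic, span_image_Iic_eq_of_sum_tmul_eq hβ hγ hsum (hβ0 _) hspan]

/-- uniqueness of the decomposition.  If a vector of `mᵏ` admits two
decompositions `Σⱼ b₁⋯bⱼ·Vⱼ = Σⱼ c₁⋯cⱼ·Wⱼ` with all `bⱼ, cⱼ ∈ m` nonzero and
`(V₁,…,V_h)`, `(W₁,…,W_s)` linearly independent families in `Kᵏ`, then `h = s` and the
associated flags coincide: `span{V₁,…,Vᵢ} = span{W₁,…,Wᵢ}` for every `i`. -/
theorem stmt18 (K : Type*) [Field K] (A : Type*) [CommRing A] [IsDomain A]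
    [ValuationRing A] [Algebra K A]
    (hres : Function.Bijective
      ((IsLocalRing.residue A).comp (algebraMap K A) : K →+* IsLocalRing.ResidueField A))
    (k h s : ℕ) (V : Fin h → Fin k → K) (W : Fin s → Fin k → K)
    (hV : LinearIndependent K V) (hW : LinearIndependent K W)
    (b : Fin h → A) (c : Fin s → A)
    (hb : ∀ j, b j ∈ IsLocalRing.maximalIdeal A) (hb0 : ∀ j, b j ≠ 0)
    (hc : ∀ j, c j ∈ IsLocalRing.maximalIdeal A) (hc0 : ∀ j, c j ≠ 0)
    (heq : ∀ i : Fin k,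
      ∑ j : Fin h, (∏ l ∈ Finset.Iic j, b l) * algebraMap K A (V j i) =
        ∑ j : Fin s, (∏ l ∈ Finset.Iic j, c l) * algebraMap K A (W j i)) :
    h = s ∧ ∀ i : ℕ, i < h →
      Submodule.span K (V '' {j : Fin h | (j : ℕ) ≤ i}) =
        Submodule.span K (W '' {j : Fin s | (j : ℕ) ≤ i}) := by
  exact stmt18_general hV hW
    (strictAnti_span_prod_Iic hb hb0) (fun j => Finset.prod_ne_zero_iff.2 fun l _ => hb0 l)
    (strictAnti_span_prod_Iic hc hc0) (fun j => Finset.prod_ne_zero_iff.2 fun l _ => hc0 l)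
    (sum_tmul_eq_sum_tmul_iff_forall.2 heq)
end

section
/- Every finite-dimensional complex semisimple Lie algebra is rigid: if μ ∈ Lⁿ is a Lie algebra law such that the Lie algebra (ℂⁿ, μ) is semisimple, then the orbit O(μ) is open in Lⁿ. -/
/-!
Two classical facts combine: a law with `H²(μ, μ) = 0` is rigid (Nijenhuis–Richardson), and the
second adjoint cohomology of a semisimple Lie algebra vanishes (Whitehead).

For the first, choose a complement `W` of the coboundaries in the space of bilinear maps. The
derivative of `(f, w) ↦ f*(μ + w)` at `(1, 0)` is `(g, w) ↦ δg + w`, which maps onto the whole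
space, so every `ν` near `μ` is `f*(μ + w)` with `f` invertible and `w ∈ W` small. If `ν` is a Lie
law, so is `μ + w`, which says `δw + w∘w = 0`. As `W` contains no nonzero cocycle, `δ` is injective
on the alternating part of `W`, so its linear term dominates and `w = 0`.

For the second, let `(bᵢ)` be a basis and `(aᵢ)` its dual basis for the Killing form. The Casimir
tensor `∑ aᵢ ⊗ bᵢ` is invariant and acts as the identity in the adjoint representation; therefore
`(hφ)(y) = ∑ [aᵢ, φ(bᵢ, y)]` satisfies `δ(hφ) + h(δφ) = φ` in degree two.
-/

set_option synthInstance.maxHeartbeats 400000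
set_option maxHeartbeats 1000000

noncomputable section

open Filter Topology TensorProduct LieModule.Cohomology

/-! ### Whitehead's second lemma -/

section Casimir

variable {ι K V : Type*} [DecidableEq ι] [Field K] [AddCommGroup V] [Module K V]
  {B : LinearMap.BilinForm K V} (hB : B.Nondegenerate) (b : Module.Basis ι K V)

theorem repr_eq_apply_dualBasis_left [Finite ι] (v : V) (i : ι) :
    b.repr v i = B (B.dualBasis hB b i) v := by
  have : b.coord i = B (B.dualBasis hB b i) := b.ext fun j ↦ by
    simp [LinearMap.BilinForm.apply_dualBasis_left, Finsupp.single_apply]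
  exact DFunLike.congr_fun this v

theorem sum_dualBasis_tmul_of_isAdjointPair [Fintype ι] {f g : V →ₗ[K] V}
    (hfg : LinearMap.IsAdjointPair B B f g) :
    ∑ i, f (B.dualBasis hB b i) ⊗ₜ[K] b i = ∑ i, B.dualBasis hB b i ⊗ₜ[K] g (b i) := by
  set a := B.dualBasis hB b with ha
  calc ∑ i, f (a i) ⊗ₜ[K] b i
      = ∑ i, ∑ j, (B (f (a i)) (b j) • a j) ⊗ₜ[K] b i := by
        simp only [← sum_tmul, ← B.dualBasis_repr_apply hB b, ← ha, a.sum_repr]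
    _ = ∑ j, ∑ i, a j ⊗ₜ[K] (B (a i) (g (b j)) • b i) := by
        rw [Finset.sum_comm]
        simp only [hfg _ _, smul_tmul]
    _ = ∑ j, a j ⊗ₜ[K] g (b j) := by
        simp only [← tmul_sum, ha, ← repr_eq_apply_dualBasis_left, b.sum_repr]

end Casimir

section Homotopy

variable {ι R L M : Type*} [Fintype ι] [CommRing R] [LieRing L] [LieAlgebra R L]
  [AddCommGroup M] [Module R M] [LieRingModule L M] [LieModule R L M]

/-- The contracting homotopy in degree two attached to a tensor `∑ aᵢ ⊗ bᵢ` of `L ⊗ L`: it sends a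
2-cochain `φ` to the 1-cochain `y ↦ ∑ [aᵢ, φ(bᵢ, y)]`. -/
def tensorHomotopy (a b : ι → L) (φ : twoCochain R L M) : oneCochain R L M :=
  ∑ i, LieModule.toEnd R L M (a i) ∘ₗ φ (b i)

theorem tensorHomotopy_apply (a b : ι → L) (φ : twoCochain R L M) (y : L) :
    tensorHomotopy a b φ y = ∑ i, ⁅a i, φ (b i) y⁆ := by
  simp [tensorHomotopy]

theorem sum_lie_lie_apply_of_invariant {a b : ι → L}
    (hinv : ∀ y, ∑ i, ⁅a i, y⁆ ⊗ₜ[R] b i = ∑ i, a i ⊗ₜ[R] ⁅y, b i⁆)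
    (φ : twoCochain R L M) (y z : L) :
    ∑ i, ⁅⁅a i, y⁆, φ (b i) z⁆ = ∑ i, ⁅a i, φ ⁅y, b i⁆ z⁆ := by
  let T : L →ₗ[R] L →ₗ[R] M :=
    (LieModule.toEnd R L M : L →ₗ[R] Module.End R M).compl₂ (φ.1.flip z)
  simpa [T] using congrArg (TensorProduct.lift T) (hinv y)

theorem d₁₂_tensorHomotopy_add {a b : ι → L}
    (hinv : ∀ y, ∑ i, ⁅a i, y⁆ ⊗ₜ[R] b i = ∑ i, a i ⊗ₜ[R] ⁅y, b i⁆)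
    (hone : ∀ m : M, ∑ i, ⁅a i, ⁅b i, m⁆⁆ = m) (φ : twoCochain R L M) (y z : L) :
    d₁₂ R L M (tensorHomotopy a b φ) y z + ∑ i, ⁅a i, d₂₃ R L M φ (b i) y z⁆ = φ y z := by
  have hy := sum_lie_lie_apply_of_invariant hinv φ y z
  have hz := sum_lie_lie_apply_of_invariant hinv φ z y
  rw [← sub_eq_zero, ← Finset.sum_sub_distrib] at hy hz
  rw [← hone (φ y z), ← sub_eq_zero, ← sub_eq_zero.mpr (hz.trans hy.symm)]
  simp only [d₁₂_apply_apply, tensorHomotopy_apply, lie_sum, ← Finset.sum_add_distrib,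
    ← Finset.sum_sub_distrib]
  -- Invariance in `y` and in `z` cancels every term but `⁅a i, ⁅b i, φ y z⁆⁆`.
  refine Finset.sum_congr rfl fun i _ ↦ ?_
  rw [d₂₃_apply, ← lie_skew y (b i), ← lie_skew z (b i), ← twoCochain_skew φ (b i) ⁅y, z⁆]
  simp only [map_neg, LinearMap.neg_apply, lie_neg, lie_add, lie_sub, lie_lie]
  abel

theorem twoCocycle_le_range_d₁₂ {a b : ι → L}
    (hinv : ∀ y, ∑ i, ⁅a i, y⁆ ⊗ₜ[R] b i = ∑ i, a i ⊗ₜ[R] ⁅y, b i⁆)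
    (hone : ∀ m : M, ∑ i, ⁅a i, ⁅b i, m⁆⁆ = m) :
    twoCocycle R L M ≤ LinearMap.range (d₁₂ R L M) := by
  intro φ hφ
  refine ⟨tensorHomotopy a b φ, DFunLike.ext _ _ fun y ↦ LinearMap.ext fun z ↦ ?_⟩
  simpa [(mem_twoCocycle_iff R L M φ).mp hφ] using d₁₂_tensorHomotopy_add hinv hone φ y z

end Homotopy

section Killing

variable {ι K L : Type*} [Field K] [LieRing L] [LieAlgebra K L]

theorem sum_lie_dualBasis_killingForm_tmul [Fintype ι] [DecidableEq ι]
    (hκ : (killingForm K L).Nondegenerate) (b : Module.Basis ι K L) (y : L) :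
    ∑ i, ⁅(killingForm K L).dualBasis hκ b i, y⁆ ⊗ₜ[K] b i =
      ∑ i, (killingForm K L).dualBasis hκ b i ⊗ₜ[K] ⁅y, b i⁆ := by
  have hadj : LinearMap.IsAdjointPair (killingForm K L) (killingForm K L)
      (-LieAlgebra.ad K L y : Module.End K L) (LieAlgebra.ad K L y) := fun x z ↦ by
    rw [LinearMap.neg_apply, LieAlgebra.ad_apply, lie_skew]
    exact LieModule.traceForm_apply_lie_apply K L L x y z
  simpa only [LinearMap.neg_apply, LieAlgebra.ad_apply, lie_skew] using
    sum_dualBasis_tmul_of_isAdjointPair hκ b hadj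

theorem sum_lie_lie_dualBasis_killingForm [Fintype ι] [DecidableEq ι]
    (hκ : (killingForm K L).Nondegenerate) (b : Module.Basis ι K L) (x : L) :
    ∑ i, ⁅(killingForm K L).dualBasis hκ b i, ⁅b i, x⁆⁆ = x := by
  refine sub_eq_zero.mp (hκ.1 _ fun y ↦ ?_)
  rw [map_sub, LinearMap.sub_apply, sub_eq_zero]
  calc killingForm K L (∑ i, ⁅(killingForm K L).dualBasis hκ b i, ⁅b i, x⁆⁆) y
      = ∑ i, b.repr ⁅y, ⁅x, b i⁆⁆ i := by
        rw [map_sum, LinearMap.sum_apply]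
        refine Finset.sum_congr rfl fun i _ ↦ ?_
        rw [LieModule.traceForm_apply_lie_apply, ← repr_eq_apply_dualBasis_left,
          ← lie_skew y, ← lie_skew (b i) x, neg_lie]
    _ = killingForm K L y x := by
        simp [LieModule.traceForm_apply_apply, LinearMap.trace_eq_matrix_trace K b, Matrix.trace,
          LinearMap.toMatrix_apply]
    _ = killingForm K L x y := LieModule.traceForm_comm K L L y x

theorem twoCocycle_le_range_d₁₂_of_isKilling [Module.Finite K L] [LieAlgebra.IsKilling K L] :
    twoCocycle K L L ≤ LinearMap.range (d₁₂ K L L) :=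
  have hκ := LieAlgebra.IsKilling.killingForm_nondegenerate K L
  let b := Module.finBasis K L
  twoCocycle_le_range_d₁₂ (sum_lie_dualBasis_killingForm_tmul hκ b)
    (sum_lie_lie_dualBasis_killingForm hκ b)

end Killing

section Transport

variable {n : ℕ} {μ : Bil n} {L : Type*} [LieRing L] [LieAlgebra ℂ L]

theorem IsAlt.swap (h : IsAlt μ) (X Y : E n) : μ X Y = -μ Y X := by
  have := h (X + Y)
  simp only [map_add, add_apply, h X, h Y, zero_add, add_zero] at this
  exact eq_neg_of_add_eq_zero_right this

/-- The Chevalley–Eilenberg 2-cochain of `L` corresponding to an alternating bilinear map on `ℂⁿ`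
under a linear identification of `L` with `ℂⁿ`. -/
def cochainOfIsAlt (e : L ≃ₗ[ℂ] E n) {φ : Bil n} (hφ : IsAlt φ) : twoCochain ℂ L L :=
  ⟨(φ.toLinearMap₁₂.compl₁₂ e.toLinearMap e.toLinearMap).compr₂ e.symm.toLinearMap,
    fun x ↦ by simp [hφ (e x)]⟩

theorem cochainOfIsAlt_apply (e : L ≃ₗ[ℂ] E n) {φ : Bil n} (hφ : IsAlt φ) (x y : L) :
    cochainOfIsAlt e hφ x y = e.symm (φ (e x) (e y)) :=
  rfl

theorem cochainOfIsAlt_mem_twoCocycle (hμ : IsAlt μ) {e : L ≃ₗ[ℂ] E n}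
    (he : ∀ x y : L, e ⁅x, y⁆ = μ (e x) (e y)) {φ : Bil n} (hφ : φ ∈ Z2 μ) :
    cochainOfIsAlt e hφ.1 ∈ twoCocycle ℂ L L := by
  rw [mem_twoCocycle_iff]
  ext x y z
  apply e.injective
  have hcocycle := hφ.2 (e x) (e y) (e z)
  simp only [circ, hμ.swap (φ _ _)] at hcocycle
  rw [hφ.1.swap (e z) (e x), hμ.swap (e z) (e x), map_neg, map_neg, neg_apply] at hcocycle
  simp only [d₂₃_apply, cochainOfIsAlt_apply, map_add, map_sub, he, LinearEquiv.apply_symm_apply,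
    LinearMap.zero_apply, map_zero]
  linear_combination -hcocycle

theorem Z2_subset_B2_of_isSemisimple [LieAlgebra.IsSemisimple ℂ L] (hμ : IsAlt μ)
    (e : L ≃ₗ[ℂ] E n) (he : ∀ x y : L, e ⁅x, y⁆ = μ (e x) (e y)) : Z2 μ ⊆ B2 μ := by
  intro φ hφ
  have : Module.Finite ℂ L := Module.Finite.equiv e.symm
  -- The instance `IsKilling ℂ L` is Cartan's criterion.
  obtain ⟨f, hf⟩ := twoCocycle_le_range_d₁₂_of_isKilling (cochainOfIsAlt_mem_twoCocycle hμ he hφ)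
  refine ⟨(e.toLinearMap ∘ₗ f ∘ₗ e.symm.toLinearMap).toContinuousLinearMap, ?_⟩
  ext1 X; ext1 Y
  have hXY : d₁₂ ℂ L L f (e.symm X) (e.symm Y) = e.symm (φ X Y) := by
    simp [hf, cochainOfIsAlt_apply]
  have hbracket : e.symm (μ X Y) = ⁅e.symm X, e.symm Y⁆ := by simp [LinearEquiv.symm_apply_eq, he]
  rw [LinearEquiv.eq_symm_apply, d₁₂_apply_apply] at hXY
  simp only [← hXY, map_sub, he, LinearEquiv.apply_symm_apply, delta1_apply, hbracket,
    LinearMap.coe_toContinuousLinearMap', LinearMap.comp_apply, LinearEquiv.coe_coe,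
    hμ.swap (e _) Y]
  abel

end Transport

/-! ### Laws with vanishing second cohomology are rigid -/

theorem eventually_eq_zero_of_quadratic {𝕜 V F : Type*} [NontriviallyNormedField 𝕜]
    [CompleteSpace 𝕜] [NormedAddCommGroup V] [NormedSpace 𝕜 V] [FiniteDimensional 𝕜 V]
    [AddCommGroup F] [Module 𝕜 F] (A : V →ₗ[𝕜] F) (B : V →ₗ[𝕜] V →ₗ[𝕜] F) (S : Submodule 𝕜 V)
    (hS : Disjoint S (LinearMap.ker A)) :
    ∀ᶠ w in 𝓝 (0 : V), w ∈ S → A w + B w w = 0 → w = 0 := by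
  have : CompleteSpace V := FiniteDimensional.complete 𝕜 V
  obtain ⟨G, hG⟩ := (A.domRestrict S).exists_leftInverse_of_injective
    (LinearMap.ker_eq_bot.mpr (LinearMap.injective_domRestrict_iff.mpr hS))
  let Q : V →L[𝕜] V →L[𝕜] V := (B.compr₂ (S.subtype ∘ₗ G)).toContinuousBilinearMap
  have hunit : ∀ᶠ w in 𝓝 (0 : V), IsUnit (1 + Q w) :=
    (by fun_prop : Continuous fun w ↦ 1 + Q w).continuousAt.eventually
      (Units.isOpen.mem_nhds (by simp))
  filter_upwards [hunit] with w hw hwS hw0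
  have hAw : (G (A w) : V) = w := congrArg Subtype.val (LinearMap.congr_fun hG ⟨w, hwS⟩)
  have hker : (1 + Q w) w = 0 :=
    calc (1 + Q w) w = G (A w) + G (B w w) := by simp [Q, hAw]
      _ = 0 := by rw [← Submodule.coe_add, ← map_add, hw0, map_zero, Submodule.coe_zero]
  exact (ContinuousLinearEquiv.ofUnit hw.unit).injective (hker.trans (map_zero _).symm)

section Rigidity

-- `Bil n` nests two spaces of continuous linear maps, whose normed structures are found one
-- pending instance problem inside another.
set_option maxSynthPendingDepth 3

variable {n : ℕ} {μ ν ξ : Bil n}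

theorem circ_self_eq_zero (hμ : μ ∈ LieLaw n) (X Y Z : E n) : circ μ μ X Y Z = 0 := by
  rw [circ, hμ.1.swap (μ X Y) Z, hμ.1.swap (μ Y Z) X, hμ.1.swap (μ Z X) Y, ← neg_eq_zero,
    ← hμ.2 X Y Z]
  abel

/-- The Gerstenhaber product `circ` as a bilinear map, so that `φ ↦ circₗ μ φ + circₗ φ μ` is the
coboundary operator on 2-cochains. Its values are plain functions of three vectors: only the vector
space structure of the target is needed. -/
def circₗ : Bil n →ₗ[ℂ] Bil n →ₗ[ℂ] E n → E n → E n → E n :=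
  LinearMap.mk₂ ℂ circ
    (fun φ φ' ψ ↦ by ext1 X; ext1 Y; ext1 Z; simp only [circ, add_apply, Pi.add_apply]; abel)
    (fun c φ ψ ↦ by ext1 X; ext1 Y; ext1 Z; simp [circ])
    (fun φ ψ ψ' ↦ by
      ext1 X; ext1 Y; ext1 Z; simp only [circ, map_add, add_apply, Pi.add_apply]; abel)
    (fun c φ ψ ↦ by ext1 X; ext1 Y; ext1 Z; simp [circ])

variable (n) in
/-- The subspace of alternating bilinear maps on `ℂⁿ`, that is, of 2-cochains. -/
def altBil : Submodule ℂ (Bil n) where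
  carrier := {φ | IsAlt φ}
  add_mem' hφ hψ X := by simp [hφ X, hψ X]
  zero_mem' X := rfl
  smul_mem' c φ hφ X := by simp [hφ X]

theorem eventually_eq_zero_of_add_mem_LieLaw (hμ : μ ∈ LieLaw n) (W : Submodule ℂ (Bil n))
    (hW : ∀ φ ∈ Z2 μ, φ ∈ W → φ = 0) :
    ∀ᶠ w in 𝓝 (0 : Bil n), w ∈ W → μ + w ∈ LieLaw n → w = 0 := by
  have hdisj : Disjoint (W ⊓ altBil n) (LinearMap.ker (circₗ μ + circₗ.flip μ)) := by
    rw [Submodule.disjoint_def]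
    rintro φ ⟨hφW, hφ⟩ hδφ
    exact hW φ ⟨hφ, fun X Y Z ↦ congrFun (congrFun₂ hδφ X Y) Z⟩ hφW
  filter_upwards [eventually_eq_zero_of_quadratic _ circₗ _ hdisj] with w hw hwW hlaw
  have hw_alt : IsAlt w := fun X ↦ by simpa [hμ.1 X] using hlaw.1 X
  refine hw ⟨hwW, hw_alt⟩ ?_
  have hμμ : circₗ μ μ = 0 := funext₃ (circ_self_eq_zero hμ)
  have hνν : circₗ (μ + w) (μ + w) = 0 := funext₃ (circ_self_eq_zero hlaw)
  calc (circₗ μ + circₗ.flip μ) w + circₗ w w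
      = circₗ (μ + w) (μ + w) - circₗ μ μ := by
        simp only [map_add, LinearMap.add_apply, LinearMap.flip_apply]; abel
    _ = 0 := by rw [hμμ, hνν, sub_zero]

/-- The coboundary operator `delta1 μ` as a continuous linear map. -/
def delta1L (μ : Bil n) : (E n →L[ℂ] E n) →L[ℂ] Bil n :=
  LinearMap.toContinuousLinearMap
    { toFun := delta1 μ
      map_add' := fun g h ↦ by
        ext1 X; ext1 Y; simp only [delta1_apply, map_add, add_apply]; abel
      map_smul' := fun r g ↦ by ext1 X; ext1 Y; simp [delta1_apply] }

theorem delta1L_apply (μ : Bil n) (g : E n →L[ℂ] E n) : delta1L μ g = delta1 μ g := rfl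

theorem hasStrictFDerivAt_conj (μ : Bil n) :
    HasStrictFDerivAt (fun p : (E n →L[ℂ] E n) × Bil n ↦ conj p.1 p.2)
      ((delta1L μ).coprod (.id ℂ (Bil n))) (1, μ) := by
  let F := (ContinuousLinearMap.flipₗᵢ ℂ (E n) (E n) (E n)).toContinuousLinearEquiv
  have hfst : HasStrictFDerivAt (fun p : (E n →L[ℂ] E n) × Bil n ↦ p.1) _ (1, μ) :=
    hasStrictFDerivAt_fst (𝕜 := ℂ)
  have hsnd : HasStrictFDerivAt (fun p : (E n →L[ℂ] E n) × Bil n ↦ p.2) _ (1, μ) :=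
    hasStrictFDerivAt_snd (𝕜 := ℂ)
  have hinv : HasStrictFDerivAt (fun p : (E n →L[ℂ] E n) × Bil n ↦ Ring.inverse p.1) _ (1, μ) :=
    (hasStrictFDerivAt_ringInverse (𝕜 := ℂ) (1 : (E n →L[ℂ] E n)ˣ)).comp (1, μ) hfst
  have hleft := ((ContinuousLinearMap.compL ℂ (E n) (E n) (E n)).hasStrictFDerivAt.comp
    (1, μ) hinv).clm_comp hsnd
  have hright₁ := (F.hasStrictFDerivAt.comp (1, μ) hleft).clm_comp hfst
  have hright₂ := (F.hasStrictFDerivAt.comp (1, μ) hright₁).clm_comp hfst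
  refine hright₂.congr_fderiv (ContinuousLinearMap.ext fun ⟨g, w⟩ ↦ ?_)
  ext1 X; ext1 Y
  simp only [Ring.inverse_one, LinearIsometryEquiv.coe_toContinuousLinearEquiv,
    ContinuousLinearMap.coe_flipₗᵢ, inv_one, Units.val_one, ContinuousLinearMap.neg_comp,
    ContinuousLinearMap.comp_neg, ContinuousLinearMap.comp_add, add_apply,
    ContinuousLinearMap.comp_apply, ContinuousLinearMap.coe_fst', ContinuousLinearMap.compL_apply,
    ContinuousLinearEquiv.coe_coe, ContinuousLinearMap.flip_apply, ContinuousLinearMap.coe_snd',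
    neg_apply, ContinuousLinearMap.mulLeftRight_apply, one_mul, mul_one, one_apply_eq_self,
    ContinuousLinearMap.coprod_apply, delta1L_apply, ContinuousLinearMap.id_apply, delta1_apply, F]
  abel

theorem continuous_conj (f : E n →L[ℂ] E n) : Continuous (conj f : Bil n → Bil n) := by
  simp only [continuous_clm_apply, conj_apply]
  fun_prop

theorem conj_one (μ : Bil n) : conj 1 μ = μ := by
  ext1 X; ext1 Y
  simp [conj_apply]

theorem conj_mem_orbit (μ : Bil n) (u : (E n →L[ℂ] E n)ˣ) : conj u μ ∈ orbit μ := by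
  refine ⟨ContinuousLinearEquiv.ofUnit u, fun X Y ↦ ?_⟩
  rw [conj_apply, Ring.inverse_unit]
  rfl

theorem exists_conj_eq_of_mem_orbit (hν : ν ∈ orbit μ) :
    ∃ u : (E n →L[ℂ] E n)ˣ, conj u μ = ν := by
  obtain ⟨f, hf⟩ := hν
  refine ⟨f.toUnit, ?_⟩
  ext1 X; ext1 Y
  rw [conj_apply, Ring.inverse_unit, hf]
  rfl

theorem mem_LieLaw_of_mem_orbit (hν : ν ∈ orbit μ) (h : μ ∈ LieLaw n) : ν ∈ LieLaw n := by
  obtain ⟨f, hf⟩ := hν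
  refine ⟨fun X ↦ by rw [hf, h.1, map_zero], fun X Y Z ↦ ?_⟩
  simp only [hf, f.apply_symm_apply, ← map_add, h.2 (f X) (f Y) (f Z), map_zero]

theorem mem_orbit_symm (hν : ν ∈ orbit μ) : μ ∈ orbit ν := by
  obtain ⟨f, hf⟩ := hν
  exact ⟨f.symm, fun X Y ↦ by simp [hf]⟩

theorem mem_orbit_trans (hν : ν ∈ orbit μ) (hξ : ξ ∈ orbit ν) : ξ ∈ orbit μ := by
  obtain ⟨f, hf⟩ := hν
  obtain ⟨g, hg⟩ := hξ
  exact ⟨g.trans f, fun X Y ↦ by simp [hf, hg]⟩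

theorem map_conj_add_nhds (W : Submodule ℂ (Bil n)) (hW : (delta1L μ).range ⊔ W = ⊤) :
    map (fun p : (E n →L[ℂ] E n) × W ↦ conj p.1 (μ + p.2)) (𝓝 (1, 0)) = 𝓝 μ := by
  have : CompleteSpace W := FiniteDimensional.complete ℂ W
  have hslice : HasStrictFDerivAt (fun p : (E n →L[ℂ] E n) × W ↦ (p.1, μ + p.2))
      ((ContinuousLinearMap.id ℂ (E n →L[ℂ] E n)).prodMap W.subtypeL) (1, 0) :=
    hasStrictFDerivAt_fst.prodMk
      ((W.subtypeL.hasStrictFDerivAt.comp (1, 0) hasStrictFDerivAt_snd).const_add μ)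
  have hconj := hasStrictFDerivAt_conj (μ + ((0 : W) : Bil n))
  have hmap := (hconj.comp (1, 0) hslice).map_nhds_eq_of_surj <| by
    rw [← top_le_iff, ← hW, sup_le_iff]
    refine ⟨?_, fun w hw ↦ ⟨(0, ⟨w, hw⟩), by simp⟩⟩
    rintro _ ⟨g, rfl⟩
    exact ⟨(g, 0), by simp⟩
  simpa [conj_one] using hmap

theorem eventually_mem_orbit (hμ : μ ∈ LieLaw n) (hZB : Z2 μ ⊆ B2 μ) :
    ∀ᶠ ν in 𝓝 μ, ν ∈ LieLaw n → ν ∈ orbit μ := by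
  obtain ⟨W, hW⟩ := (delta1L μ).range.exists_isCompl
  have hZW (φ) (hφ : φ ∈ Z2 μ) (hφW : φ ∈ W) : φ = 0 :=
    Submodule.disjoint_def.mp hW.disjoint φ (hZB hφ) hφW
  rw [← map_conj_add_nhds W hW.sup_eq_top, eventually_map]
  have hunit : ∀ᶠ p : (E n →L[ℂ] E n) × W in 𝓝 (1, 0), IsUnit p.1 :=
    continuousAt_fst.eventually (Units.isOpen.mem_nhds (by simp))
  have hsnd : Tendsto (fun p : (E n →L[ℂ] E n) × W ↦ (p.2 : Bil n)) (𝓝 (1, 0)) (𝓝 0) :=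
    Continuous.tendsto' (by fun_prop) _ _ rfl
  have hsmall : ∀ᶠ p : (E n →L[ℂ] E n) × W in 𝓝 (1, 0),
      (p.2 : Bil n) ∈ W → μ + p.2 ∈ LieLaw n → (p.2 : Bil n) = 0 :=
    hsnd.eventually (eventually_eq_zero_of_add_mem_LieLaw hμ W hZW)
  filter_upwards [hunit, hsmall] with ⟨f, w⟩ hf hw hlaw
  obtain ⟨u, rfl : (u : E n →L[ℂ] E n) = f⟩ := hf
  have horb := conj_mem_orbit (μ + (w : Bil n)) u
  have hw0 : (w : Bil n) = 0 := hw w.2 (mem_LieLaw_of_mem_orbit (mem_orbit_symm horb) hlaw)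
  simpa only [hw0, add_zero] using horb

theorem isOpen_orbit_of_Z2_subset_B2 (hμ : μ ∈ LieLaw n) (hZB : Z2 μ ⊆ B2 μ) :
    IsOpen {ν : LieLaw n | (ν : Bil n) ∈ orbit μ} := by
  rw [isOpen_iff_eventually]
  intro ν hν
  obtain ⟨u, hu⟩ := exists_conj_eq_of_mem_orbit (mem_orbit_symm hν)
  have hconj : Tendsto (fun ξ : LieLaw n ↦ conj (u : E n →L[ℂ] E n) ξ) (𝓝 ν) (𝓝 μ) :=
    ((continuous_conj _).comp continuous_subtype_val).tendsto' _ _ hu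
  filter_upwards [hconj.eventually (eventually_mem_orbit hμ hZB)] with ξ hξ
  have horb := conj_mem_orbit (ξ : Bil n) u
  exact mem_orbit_trans (hξ (mem_LieLaw_of_mem_orbit horb ξ.2)) (mem_orbit_symm horb)

end Rigidity

/-- every finite-dimensional complex semisimple Lie algebra is rigid: if the
Lie algebra `(ℂⁿ, μ)` is semisimple then the orbit `O(μ)` is open in `Lⁿ`. -/
theorem stmt19 (n : ℕ) (μ : Bil n) (hμ : μ ∈ LieLaw n)
    (L : Type) (instLR : LieRing L) (instLA : LieAlgebra ℂ L)
    (hss : LieAlgebra.IsSemisimple ℂ L)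
    (e : L ≃ₗ[ℂ] E n) (he : ∀ x y : L, e ⁅x, y⁆ = μ (e x) (e y)) :
    IsOpen {ν : LieLaw n | (ν : Bil n) ∈ orbit μ} := by
  exact isOpen_orbit_of_Z2_subset_B2 hμ (Z2_subset_B2_of_isSemisimple hμ.1 e he)
end
end
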